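/- arXiv:1809.00435 — 3 statements merged into one kernel-verified Lean document; each statement's English description precedes it below -/
import Mathlib

section
/- Let Ω ⊆ ℝⁿ be open, let ψ : ℝⁿ → ℝ be twice continuously differentiable on Ω, let φ : ℝⁿ → ℝ be twice continuously differentiable with compact support contained in Ω, and let η : ℝ → ℝ be continuously differentiable with η(t) > 0 and η′(t) > 0 for all t. Then ∫_Ω φ(x)² · [ 2·Δψ(x)/η(−ψ(x)) + η′(−ψ(x))·|∇ψ(x)|² / η(−ψ(x))² ] dx ≤ 4 ∫_Ω |∇φ(x)|² / η′(−ψ(x)) dx, where Δψ is the Laplacian of ψ, ∇ denotes the gradient, and the integrals are with respect to Lebesgue measure. -/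
open MeasureTheory Metric
open scoped Real Topology ENNReal

noncomputable section

/-- The Euclidean Laplacian `Δψ(x) = Σᵢ ∂²ψ/∂xᵢ²(x)`. -/
def lap (n : ℕ) (ψ : EuclideanSpace ℝ (Fin n) → ℝ) (x : EuclideanSpace ℝ (Fin n)) : ℝ :=
  ∑ i : Fin n, fderiv ℝ (fun y => fderiv ℝ ψ y (EuclideanSpace.single i 1)) x
    (EuclideanSpace.single i 1)

/-!
Put `f = φ² / η(-ψ)`, so that `∇f = (2φ/η) ∇φ + (φ²η'/η²) ∇ψ` with `η`, `η'` evaluated at `-ψ`.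
Green's identity `∫ f Δψ = -∫ ⟪∇f, ∇ψ⟫` turns the left-hand side into
`∫ -(4 (φ/η) ⟪∇φ, ∇ψ⟫ + (φ/η)² η' |∇ψ|²)`, whose integrand is at most `4 |∇φ|² / η'` because
`|2 ∇φ + (φη'/η) ∇ψ|² ≥ 0`.
-/

section WeightedEnergy

open Function InnerProductSpace
open scoped Gradient Laplacian ContDiff

section CompactSupport

variable {X : Type*} [TopologicalSpace X]

lemma tsupport_sq_div_subset (φ w : X → ℝ) : tsupport (fun x => φ x ^ 2 / w x) ⊆ tsupport φ :=
  closure_mono fun x hx hφx => hx <| by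
    simp only [hφx, ne_eq, two_ne_zero, not_false_eq_true, zero_pow, zero_div]

variable [T2Space X] [MeasurableSpace X] [OpensMeasurableSpace X] {μ : Measure X}
  [IsFiniteMeasureOnCompacts μ] {f g : X → ℝ}

lemma integrable_of_continuousAt_of_support_subset {K : Set X} (hK : IsCompact K)
    (hg : ∀ x ∈ K, ContinuousAt g x) (hgK : support g ⊆ K) : Integrable g μ :=
  (integrableOn_iff_integrable_of_support_subset hgK).1 <|
    ContinuousOn.integrableOn_compact hK fun x hx => (hg x hx).continuousWithinAt

lemma integrable_mul_of_continuousAt_tsupport (hf : Continuous f) (hfc : HasCompactSupport f)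
    (hg : ∀ x ∈ tsupport f, ContinuousAt g x) : Integrable (fun x => f x * g x) μ :=
  integrable_of_continuousAt_of_support_subset hfc
    (fun x hx => hf.continuousAt.mul (hg x hx))
    ((support_mul_subset_left _ _).trans (subset_tsupport f))

lemma integrable_sq_mul_of_continuousAt_tsupport (hf : Continuous f) (hfc : HasCompactSupport f)
    (hg : ∀ x ∈ tsupport f, ContinuousAt g x) : Integrable (fun x => f x ^ 2 * g x) μ :=
  integrable_of_continuousAt_of_support_subset hfc
    (fun x hx => (hf.continuousAt.pow 2).mul (hg x hx)) <|
    (support_mul_subset_left _ _).trans <|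
      (support_pow f two_ne_zero).subset.trans (subset_tsupport f)

end CompactSupport

lemma contDiff_sq_div_of_contDiffAt_tsupport {E : Type*} [NormedAddCommGroup E] [NormedSpace ℝ E]
    {m : ℕ∞ω} {φ w : E → ℝ} (hφ : ContDiff ℝ m φ) (hw : ∀ x ∈ tsupport φ, ContDiffAt ℝ m w x)
    (hw₀ : ∀ x ∈ tsupport φ, w x ≠ 0) : ContDiff ℝ m (fun x => φ x ^ 2 / w x) := by
  refine contMDiff_iff_contDiff.1 <| contMDiff_of_tsupport fun x hx => ?_
  have hxφ := tsupport_sq_div_subset φ w hx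
  exact ((hφ.contDiffAt.pow 2).div (hw x hxφ) (hw₀ x hxφ)).contMDiffAt

variable {E : Type*} [NormedAddCommGroup E] [InnerProductSpace ℝ E]

lemma neg_inner_add_norm_sq_le {d : ℝ} (hd : 0 < d) (c : ℝ) (u v : E) :
    -(4 * c * ⟪u, v⟫_ℝ + c ^ 2 * d * ‖v‖ ^ 2) ≤ 4 * (‖u‖ ^ 2 / d) := by
  have square : 4 * (‖u‖ ^ 2 / d) + (4 * c * ⟪u, v⟫_ℝ + c ^ 2 * d * ‖v‖ ^ 2) =
      ‖(2 : ℝ) • u + (c * d) • v‖ ^ 2 / d := by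
    rw [norm_add_sq_real, inner_smul_left, inner_smul_right, norm_smul, norm_smul, mul_pow, mul_pow,
      Real.norm_eq_abs, Real.norm_eq_abs, sq_abs, sq_abs, conj_trivial]
    field_simp
    ring
  have : 0 ≤ ‖(2 : ℝ) • u + (c * d) • v‖ ^ 2 / d := by positivity
  linarith

section Gradient

variable [CompleteSpace E] {f φ ψ : E → ℝ} {η : ℝ → ℝ} {x : E}

lemma gradient_eq_zero_of_notMem_tsupport (hx : x ∉ tsupport f) : ∇ f x = 0 := by
  have : fderiv ℝ f x = 0 := notMem_support.1 fun h => hx (support_fderiv_subset ℝ h)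
  rw [gradient, this, map_zero]

lemma continuousAt_gradient (hf : ContDiffAt ℝ 1 f x) : ContinuousAt (∇ f) x :=
  (toDual ℝ E).symm.continuous.continuousAt.comp
    (hf.fderiv_right (m := 0) (by norm_num)).continuousAt

lemma hasGradientAt_sq_div_comp_neg (hφ : DifferentiableAt ℝ φ x)
    (hψ : DifferentiableAt ℝ ψ x) (hη : DifferentiableAt ℝ η (-ψ x)) (hη₀ : η (-ψ x) ≠ 0) :
    HasGradientAt (fun y => φ y ^ 2 / η (-ψ y))
      ((2 * φ x / η (-ψ x)) • ∇ φ x +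
        (φ x ^ 2 * deriv η (-ψ x) / η (-ψ x) ^ 2) • ∇ ψ x) x := by
  have hinv := (hη.hasDerivAt.fun_inv hη₀).comp_hasFDerivAt x hψ.hasFDerivAt.neg
  have hprod := (hφ.hasFDerivAt.pow 2).mul hinv
  rw [hasGradientAt_iff_hasFDerivAt]
  refine hprod.congr_fderiv (ContinuousLinearMap.ext fun v => ?_)
  simp only [smul_neg, comp_apply, Pi.neg_apply, Nat.add_one_sub_one, pow_one, nsmul_eq_mul,
    Nat.cast_ofNat, add_apply, neg_apply, smul_apply, smul_eq_mul, map_add, map_smul,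
    toDual_gradient]
  field_simp
  ring

lemma sq_mul_norm_gradient_sq_sub_inner_gradient_le (hφ : DifferentiableAt ℝ φ x)
    (hψ : DifferentiableAt ℝ ψ x) (hη₀ : η (-ψ x) ≠ 0) (hη' : 0 < deriv η (-ψ x)) :
    φ x ^ 2 * (deriv η (-ψ x) * ‖∇ ψ x‖ ^ 2 / η (-ψ x) ^ 2) -
        2 * ⟪∇ (fun y => φ y ^ 2 / η (-ψ y)) x, ∇ ψ x⟫_ℝ ≤
      4 * (‖∇ φ x‖ ^ 2 / deriv η (-ψ x)) := by
  have hη : DifferentiableAt ℝ η (-ψ x) := differentiableAt_of_deriv_ne_zero hη'.ne'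
  rw [(hasGradientAt_sq_div_comp_neg hφ hψ hη hη₀).gradient, inner_add_left, inner_smul_left,
    inner_smul_left, conj_trivial, conj_trivial, real_inner_self_eq_norm_sq]
  convert! neg_inner_add_norm_sq_le hη' (φ x / η (-ψ x)) (∇ φ x) (∇ ψ x) using 1
  ring

variable [MeasurableSpace E] [OpensMeasurableSpace E] {μ : Measure E} [IsFiniteMeasureOnCompacts μ]

lemma integrable_inner_gradient (hf : ContDiff ℝ 1 f) (hfc : HasCompactSupport f)
    (hψ : ∀ x ∈ tsupport f, ContDiffAt ℝ 1 ψ x) : Integrable (fun x => ⟪∇ f x, ∇ ψ x⟫_ℝ) μ := by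
  refine integrable_of_continuousAt_of_support_subset hfc (fun x hx =>
    (continuousAt_gradient hf.contDiffAt).inner (continuousAt_gradient (hψ x hx))) fun x hx => ?_
  by_contra hxf
  exact hx (by simp only [gradient_eq_zero_of_notMem_tsupport hxf, inner_zero_left])

lemma integrable_norm_gradient_sq_div {w : E → ℝ} (hf : ContDiff ℝ 1 f) (hfc : HasCompactSupport f)
    (hw : ∀ x ∈ tsupport f, ContinuousAt w x) (hw₀ : ∀ x ∈ tsupport f, w x ≠ 0) :
    Integrable (fun x => ‖∇ f x‖ ^ 2 / w x) μ := by
  refine integrable_of_continuousAt_of_support_subset hfc (fun x hx =>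
    ((continuousAt_gradient hf.contDiffAt).norm.pow 2).div (hw x hx) (hw₀ x hx)) fun x hx => ?_
  by_contra hxf
  exact hx (by simp only [gradient_eq_zero_of_notMem_tsupport hxf, norm_zero, ne_eq, two_ne_zero,
    not_false_eq_true, zero_pow, zero_div])

end Gradient

variable [FiniteDimensional ℝ E] {ψ : E → ℝ}

section Laplacian

variable {x : E}

lemma laplacian_eq_sum_fderiv_fderiv {ι : Type*} [Fintype ι] (b : OrthonormalBasis ι ℝ E)
    (hψ : ContDiffAt ℝ 2 ψ x) :
    Δ ψ x = ∑ i, fderiv ℝ (fun y => fderiv ℝ ψ y (b i)) x (b i) := by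
  have hd : DifferentiableAt ℝ (fderiv ℝ ψ) x :=
    (hψ.fderiv_right (m := 1) (by norm_num)).differentiableAt one_ne_zero
  rw [laplacian_eq_iteratedFDeriv_orthonormalBasis ψ b]
  refine Finset.sum_congr rfl fun i _ => ?_
  rw [iteratedFDeriv_two_apply, fderiv_clm_apply hd (differentiableAt_const _)]
  simp

lemma lap_eq_laplacian {n : ℕ} {ψ : EuclideanSpace ℝ (Fin n) → ℝ} {x : EuclideanSpace ℝ (Fin n)}
    (hψ : ContDiffAt ℝ 2 ψ x) : lap n ψ x = Δ ψ x := by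
  simp only [lap, laplacian_eq_sum_fderiv_fderiv (EuclideanSpace.basisFun (Fin n) ℝ) hψ,
    EuclideanSpace.basisFun_apply]

lemma continuousAt_laplacian (hψ : ContDiffAt ℝ 2 ψ x) : ContinuousAt (Δ ψ) x := by
  rw [laplacian_eq_iteratedFDeriv_stdOrthonormalBasis]
  exact tendsto_finsetSum _ fun i _ =>
    (hψ.continuousAt_iteratedFDeriv le_rfl).eval_const _

end Laplacian

variable [MeasurableSpace E] [BorelSpace E] {μ : Measure E} [μ.IsAddHaarMeasure]

section Green

variable {f : E → ℝ}

theorem integral_mul_laplacian_eq_neg_integral_inner_gradient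
    (hf : ContDiff ℝ 1 f) (hfc : HasCompactSupport f)
    (hψ : ∀ x ∈ tsupport f, ContDiffAt ℝ 2 ψ x) :
    ∫ x, f x * Δ ψ x ∂μ = -∫ x, ⟪∇ f x, ∇ ψ x⟫_ℝ ∂μ := by
  let b := stdOrthonormalBasis ℝ E
  have hψ' (v : E) {x : E} (hx : x ∈ tsupport f) : ContDiffAt ℝ 1 (fun y => fderiv ℝ ψ y v) x :=
    ((hψ x hx).fderiv_right (m := 1) (by norm_num)).clm_apply contDiffAt_const
  have hψ'' (v : E) {x : E} (hx : x ∈ tsupport f) :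
      ContinuousAt (fun y => fderiv ℝ (fun z => fderiv ℝ ψ z v) y v) x :=
    (((hψ' v hx).fderiv_right (m := 0) (by norm_num)).clm_apply contDiffAt_const).continuousAt
  have hleft (v : E) : Integrable (fun x => f x * fderiv ℝ (fun y => fderiv ℝ ψ y v) x v) μ :=
    integrable_mul_of_continuousAt_tsupport hf.continuous hfc fun x hx => hψ'' v hx
  have hright (v : E) : Integrable (fun x => fderiv ℝ f x v * fderiv ℝ ψ x v) μ :=
    integrable_mul_of_continuousAt_tsupport
      ((hf.continuous_fderiv one_ne_zero).clm_apply continuous_const) (hfc.fderiv_apply ℝ v)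
      fun x hx => (hψ' v (tsupport_fderiv_apply_subset ℝ v hx)).continuousAt
  have hparts (v : E) : ∫ x, f x * fderiv ℝ (fun y => fderiv ℝ ψ y v) x v ∂μ =
      -∫ x, fderiv ℝ f x v * fderiv ℝ ψ x v ∂μ :=
    integral_mul_fderiv_eq_neg_fderiv_mul_of_integrable (hright v) (hleft v)
      (integrable_mul_of_continuousAt_tsupport hf.continuous hfc
        fun x hx => (hψ' v hx).continuousAt)
      (fun x _ => hf.differentiable one_ne_zero x)
      fun x hx => (hψ' v hx).differentiableAt one_ne_zero
  have hsum (x : E) : ∑ i, fderiv ℝ f x (b i) * fderiv ℝ ψ x (b i) = ⟪∇ f x, ∇ ψ x⟫_ℝ := by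
    simpa using b.sum_inner_mul_inner (∇ f x) (∇ ψ x)
  calc
    _ = ∫ x, ∑ i, f x * fderiv ℝ (fun y => fderiv ℝ ψ y (b i)) x (b i) ∂μ := by
      refine integral_congr_ae (.of_forall fun x => ?_)
      by_cases hx : x ∈ tsupport f
      · simp only [laplacian_eq_sum_fderiv_fderiv b (hψ x hx), Finset.mul_sum]
      · simp only [image_eq_zero_of_notMem_tsupport hx, zero_mul, Finset.sum_const_zero]
    _ = -∫ x, ∑ i, fderiv ℝ f x (b i) * fderiv ℝ ψ x (b i) ∂μ := by
      simp only [integral_finsetSum _ fun i _ => hleft (b i),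
        integral_finsetSum _ fun i _ => hright (b i), hparts, Finset.sum_neg_distrib]
    _ = _ := by simp only [hsum]

lemma integral_mul_laplacian_add_le {G H : E → ℝ} (c : ℝ)
    (hf : ContDiff ℝ 1 f) (hfc : HasCompactSupport f)
    (hψ : ∀ x ∈ tsupport f, ContDiffAt ℝ 2 ψ x) (hG : Integrable G μ) (hH : Integrable H μ)
    (hle : ∀ x, G x - c * ⟪∇ f x, ∇ ψ x⟫_ℝ ≤ H x) :
    ∫ x, (c * (f x * Δ ψ x) + G x) ∂μ ≤ ∫ x, H x ∂μ := by
  have hΔ : Integrable (fun x => f x * Δ ψ x) μ :=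
    integrable_mul_of_continuousAt_tsupport hf.continuous hfc fun x hx =>
      continuousAt_laplacian (hψ x hx)
  have hI : Integrable (fun x => ⟪∇ f x, ∇ ψ x⟫_ℝ) μ :=
    integrable_inner_gradient hf hfc fun x hx => (hψ x hx).of_le one_le_two
  calc
    _ = ∫ x, (G x - c * ⟪∇ f x, ∇ ψ x⟫_ℝ) ∂μ := by
      rw [integral_add (hΔ.const_mul c) hG, integral_sub hG (hI.const_mul c), integral_const_mul,
        integral_const_mul, integral_mul_laplacian_eq_neg_integral_inner_gradient hf hfc hψ]
      ring
    _ ≤ _ := integral_mono (hG.sub (hI.const_mul c)) hH hle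

end Green

theorem stmt_7_general {Ω : Set E} {φ : E → ℝ} {η : ℝ → ℝ}
    (hφ : ContDiff ℝ 1 φ) (hφs : HasCompactSupport φ) (hφΩ : tsupport φ ⊆ Ω)
    (hψ : ∀ x ∈ tsupport φ, ContDiffAt ℝ 2 ψ x)
    (hη : ∀ x ∈ tsupport φ, ContDiffAt ℝ 1 η (-ψ x))
    (hη₀ : ∀ x ∈ tsupport φ, η (-ψ x) ≠ 0)
    (hη' : ∀ x ∈ tsupport φ, 0 < deriv η (-ψ x)) :
    (∫ x in Ω, φ x ^ 2 * (2 * Δ ψ x / η (-ψ x) +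
        deriv η (-ψ x) * ‖∇ ψ x‖ ^ 2 / η (-ψ x) ^ 2) ∂μ) ≤
      4 * ∫ x in Ω, ‖∇ φ x‖ ^ 2 / deriv η (-ψ x) ∂μ := by
  have hΩ {x : E} (hx : x ∉ Ω) : x ∉ tsupport φ := fun h => hx (hφΩ h)
  have hψ₁ {x : E} (hx : x ∈ tsupport φ) : ContDiffAt ℝ 1 ψ x := (hψ x hx).of_le one_le_two
  have hηψ {x : E} (hx : x ∈ tsupport φ) : ContDiffAt ℝ 1 (fun y => η (-ψ y)) x :=
    (hη x hx).comp x (hψ₁ hx).neg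
  have hη'ψ {x : E} (hx : x ∈ tsupport φ) : ContinuousAt (fun y => deriv η (-ψ y)) x :=
    ContinuousAt.comp (g := deriv η) ((hη x hx).derivWithin (m := 0) le_rfl).continuousAt
      (hψ₁ hx).continuousAt.neg
  have hfφ : tsupport (fun x => φ x ^ 2 / η (-ψ x)) ⊆ tsupport φ := tsupport_sq_div_subset φ _
  have hf : ContDiff ℝ 1 (fun x => φ x ^ 2 / η (-ψ x)) :=
    contDiff_sq_div_of_contDiffAt_tsupport hφ (fun x hx => hηψ hx) hη₀
  have hG : Integrable
      (fun x => φ x ^ 2 * (deriv η (-ψ x) * ‖∇ ψ x‖ ^ 2 / η (-ψ x) ^ 2)) μ :=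
    integrable_sq_mul_of_continuousAt_tsupport hφ.continuous hφs fun x hx =>
      ((hη'ψ hx).mul ((continuousAt_gradient (hψ₁ hx)).norm.pow 2)).div
        ((hηψ hx).continuousAt.pow 2) (pow_ne_zero 2 (hη₀ x hx))
  have hR : Integrable (fun x => ‖∇ φ x‖ ^ 2 / deriv η (-ψ x)) μ :=
    integrable_norm_gradient_sq_div hφ hφs (fun x hx => hη'ψ hx) fun x hx => (hη' x hx).ne'
  have hpointwise (x : E) : φ x ^ 2 * (deriv η (-ψ x) * ‖∇ ψ x‖ ^ 2 / η (-ψ x) ^ 2) -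
      2 * ⟪∇ (fun y => φ y ^ 2 / η (-ψ y)) x, ∇ ψ x⟫_ℝ ≤ 4 * (‖∇ φ x‖ ^ 2 / deriv η (-ψ x)) := by
    by_cases hx : x ∈ tsupport φ
    · exact sq_mul_norm_gradient_sq_sub_inner_gradient_le (hφ.differentiable one_ne_zero x)
        ((hψ x hx).differentiableAt two_ne_zero) (hη₀ x hx) (hη' x hx)
    · simp [image_eq_zero_of_notMem_tsupport hx, gradient_eq_zero_of_notMem_tsupport hx,
        gradient_eq_zero_of_notMem_tsupport fun h => hx (hfφ h)]
  rw [setIntegral_eq_integral_of_forall_compl_eq_zero fun x hx => by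
      simp [image_eq_zero_of_notMem_tsupport (hΩ hx)],
    setIntegral_eq_integral_of_forall_compl_eq_zero fun x hx => by
      simp [gradient_eq_zero_of_notMem_tsupport (hΩ hx)], ← integral_const_mul]
  convert! integral_mul_laplacian_add_le 2 hf (hφs.of_isClosed_subset (isClosed_tsupport _) hfφ)
    (fun x hx => hψ x (hfφ hx)) hG (hR.const_mul 4) hpointwise using 3 with x
  ring

end WeightedEnergy

/-- Integration-by-parts inequality:
`∫ φ²[2Δψ/η(−ψ) + η′(−ψ)|∇ψ|²/η(−ψ)²] ≤ 4∫ |∇φ|²/η′(−ψ)`. -/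
theorem stmt_7 (n : ℕ) (Ω : Set (EuclideanSpace ℝ (Fin n))) (hΩ : IsOpen Ω)
    (ψ φ : EuclideanSpace ℝ (Fin n) → ℝ) (η : ℝ → ℝ)
    (hψ : ContDiffOn ℝ 2 ψ Ω)
    (hφ : ContDiff ℝ 2 φ) (hφs : HasCompactSupport φ) (hφΩ : tsupport φ ⊆ Ω)
    (hη : ContDiff ℝ 1 η) (hηpos : ∀ t, 0 < η t) (hη' : ∀ t, 0 < deriv η t) :
    (∫ x in Ω, φ x ^ 2 * (2 * lap n ψ x / η (-ψ x) +
        deriv η (-ψ x) * ‖gradient ψ x‖ ^ 2 / η (-ψ x) ^ 2)) ≤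
      4 * ∫ x in Ω, ‖gradient φ x‖ ^ 2 / deriv η (-ψ x) := by
  have hψΩ {x} (hx : x ∈ Ω) : ContDiffAt ℝ 2 ψ x := hψ.contDiffAt (hΩ.mem_nhds hx)
  rw [setIntegral_congr_fun hΩ.measurableSet fun x hx => by rw [lap_eq_laplacian (hψΩ hx)]]
  exact stmt_7_general (hφ.of_le one_le_two) hφs hφΩ (fun x hx => hψΩ (hφΩ hx))
    (fun _ _ => hη.contDiffAt) (fun _ _ => (hηpos _).ne') fun _ _ => hη' _
end
end

section
/- Let a ∈ ℝⁿ and r > 0, and let ψ be a negative subharmonic function on the ball B(a,2r) that is integrable on B(a,2r). Then ∫_{B(a,2r)} |ψ| ≤ 2ⁿ ∫_{B(a,r)} |ψ|. -/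
open MeasureTheory Metric
open scoped Real Topology ENNReal

noncomputable section

/-- A function is subharmonic on an open set `U ⊆ ℝⁿ` if it is upper semicontinuous on `U`
and satisfies the sub-mean value property on balls whose closure lies in `U`. -/
def Subh (n : ℕ) (ψ : EuclideanSpace ℝ (Fin n) → ℝ) (U : Set (EuclideanSpace ℝ (Fin n))) : Prop :=
  UpperSemicontinuousOn ψ U ∧
    ∀ x ∈ U, ∀ s : ℝ, 0 < s → closedBall x s ⊆ U → ψ x ≤ ⨍ y in ball x s, ψ y

/-!
Averaging `v = -ψ` over all rotations about `a` changes neither its integrals over the balls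
centred at `a` nor its super-mean value property, and makes it radial. By the minimum principle a
radial superharmonic function is nonincreasing in the distance `‖x - a‖`, so the dilation about `a`
that maps the smaller ball onto the larger one decreases it pointwise. The ratio of the two radii
may be any `c ≥ 1`.
-/

section LowerSemicontinuity

variable {X : Type*} [TopologicalSpace X]

theorem lowerSemicontinuous_indicator_of_isOpen {M : Type*} [Zero M] [Preorder M] {f : X → M}
    {U : Set X} (hU : IsOpen U) (hf : LowerSemicontinuousOn f U) (hf₀ : ∀ x ∈ U, 0 ≤ f x) :
    LowerSemicontinuous (U.indicator f) := by
  intro x c hc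
  by_cases hx : x ∈ U
  · rw [Set.indicator_of_mem hx] at hc
    have hnear : ∀ᶠ z in 𝓝 x, c < f z := by simpa only [hU.nhdsWithin_eq hx] using hf x hx c hc
    filter_upwards [hnear, hU.mem_nhds hx] with z hz hzU
    rwa [Set.indicator_of_mem hzU]
  · rw [Set.indicator_of_notMem hx] at hc
    exact .of_forall fun z => hc.trans_le (Set.indicator_nonneg hf₀ z)

theorem lowerSemicontinuous_lintegral [FirstCountableTopology X] {Ω : Type*} [MeasurableSpace Ω]
    {ν : Measure Ω} {f : Ω → X → ℝ≥0∞} (hmeas : ∀ x, Measurable fun ω => f ω x)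
    (hf : ∀ ω, LowerSemicontinuous (f ω)) :
    LowerSemicontinuous fun x => ∫⁻ ω, f ω x ∂ν :=
  lowerSemicontinuous_iff_le_liminf.2 fun x =>
    (lintegral_mono fun ω => (hf ω).le_liminf x).trans (lintegral_liminf_le hmeas)

end LowerSemicontinuity

/-- The super-mean value property on `U`, with respect to `μ`, of a function with values in
`[0, ∞]`. Together with lower semicontinuity, this is superharmonicity on `U`. Lower
semicontinuity is kept apart, so that it can be asked for on the whole space. -/
def SuperMeanValueOn {E : Type*} [PseudoMetricSpace E] [MeasurableSpace E] (μ : Measure E)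
    (v : E → ℝ≥0∞) (U : Set E) : Prop :=
  ∀ ⦃x s⦄, 0 < s → closedBall x s ⊆ U → ⨍⁻ z in ball x s, v z ∂μ ≤ v x

namespace SuperMeanValueOn

section Metric

variable {E : Type*} [PseudoMetricSpace E] [MeasurableSpace E] {μ : Measure E} {v : E → ℝ≥0∞}
  {U : Set E}

theorem indicator_ofReal [OpensMeasurableSpace E] {u : E → ℝ} (hu₀ : ∀ x ∈ U, 0 ≤ u x)
    (hint : IntegrableOn u U μ)
    (hmean : ∀ x ∈ U, ∀ s, 0 < s → closedBall x s ⊆ U → ⨍ z in ball x s, u z ∂μ ≤ u x) :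
    SuperMeanValueOn μ (U.indicator fun x => ENNReal.ofReal (u x)) U := by
  intro x s hs hxs
  have hx : x ∈ U := hxs (mem_closedBall_self hs.le)
  have hball : ball x s ⊆ U := ball_subset_closedBall.trans hxs
  calc ⨍⁻ z in ball x s, U.indicator (fun x => ENNReal.ofReal (u x)) z ∂μ
      = ⨍⁻ z in ball x s, ENNReal.ofReal (u z) ∂μ :=
        setLAverage_congr_fun measurableSet_ball fun z hz => Set.indicator_of_mem (hball hz) _
    _ = ENNReal.ofReal (⨍ z in ball x s, u z ∂μ) := by
        rw [setLAverage_eq, ofReal_setAverage (hint.mono_set hball)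
          (ae_restrict_of_forall_mem measurableSet_ball fun z hz => hu₀ z (hball hz))]
    _ ≤ ENNReal.ofReal (u x) := ENNReal.ofReal_le_ofReal (hmean x hx s hs hxs)
    _ = U.indicator (fun x => ENNReal.ofReal (u x)) x := by rw [Set.indicator_of_mem hx]

theorem mono {V : Set E} (hv : SuperMeanValueOn μ v U) (hVU : V ⊆ U) :
    SuperMeanValueOn μ v V := fun _ _ hs hxs => hv hs (hxs.trans hVU)

theorem comp_isometryEquiv [BorelSpace E] (hv : SuperMeanValueOn μ v U) (e : E ≃ᵢ E)
    (he : MeasurePreserving e μ μ) : SuperMeanValueOn μ (v ∘ e) (e ⁻¹' U) := by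
  intro x s hs hxs
  have hball : e ⁻¹' ball (e x) s = ball x s := by
    rw [e.preimage_ball, e.symm_apply_apply]
  have hclosed : closedBall (e x) s ⊆ U := by
    rw [← e.symm_apply_apply x, ← e.preimage_closedBall] at hxs
    exact (Set.preimage_subset_preimage_iff (by simp)).1 hxs
  calc ⨍⁻ z in ball x s, v (e z) ∂μ
      = ⨍⁻ z in ball (e x) s, v z ∂μ := by
        rw [setLAverage_eq, setLAverage_eq, ← hball,
          he.setLIntegral_comp_preimage_emb e.toHomeomorph.measurableEmbedding,
          he.measure_preimage measurableSet_ball.nullMeasurableSet]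
    _ ≤ v (e x) := hv hs hclosed

theorem lintegral [SFinite μ] {Ω : Type*} [MeasurableSpace Ω] {ν : Measure Ω} [SFinite ν]
    {f : Ω → E → ℝ≥0∞} (hmeas : Measurable (Function.uncurry f))
    (hf : ∀ ω, SuperMeanValueOn μ (f ω) U) :
    SuperMeanValueOn μ (fun x => ∫⁻ ω, f ω x ∂ν) U := by
  intro x s hs hxs
  calc ⨍⁻ z in ball x s, ∫⁻ ω, f ω z ∂ν ∂μ
      = ∫⁻ ω, ⨍⁻ z in ball x s, f ω z ∂μ ∂ν :=
        lintegral_lintegral_swap (hmeas.comp measurable_swap).aemeasurable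
    _ ≤ ∫⁻ ω, f ω x ∂ν := lintegral_mono fun ω => hf ω hs hxs

theorem eq_of_mem_ball_of_forall_le [OpensMeasurableSpace E] [μ.IsOpenPosMeasure]
    (hv : SuperMeanValueOn μ v U) (hlsc : LowerSemicontinuous v) {q : E} {s : ℝ} (hs : 0 < s)
    (hqs : closedBall q s ⊆ U) (hfin : μ (ball q s) ≠ ∞) (hmin : ∀ z ∈ ball q s, v q ≤ v z) :
    ∀ z ∈ ball q s, v z = v q := by
  by_cases htop : v q = ∞
  · exact fun z hz => le_antisymm (htop ▸ le_top) (hmin z hz)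
  have hle : ∫⁻ z in ball q s, v z ∂μ ≤ ∫⁻ _ in ball q s, v q ∂μ := by
    rw [setLIntegral_const, mul_comm, ← measure_mul_setLAverage v hfin]
    exact mul_le_mul_right (hv hs hqs) _
  have hae : (fun _ => v q) =ᵐ[μ.restrict (ball q s)] v :=
    ae_eq_of_ae_le_of_lintegral_le (ae_restrict_of_forall_mem measurableSet_ball hmin)
      (by simpa using ENNReal.mul_ne_top htop hfin) hlsc.measurable.aemeasurable hle
  have hopen : IsOpen (ball q s ∩ v ⁻¹' Set.Ioi (v q)) :=
    isOpen_ball.inter (hlsc.isOpen_preimage _)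
  have hnull : μ (ball q s ∩ v ⁻¹' Set.Ioi (v q)) = 0 := by
    refine measure_mono_null ?_ (ae_iff.1 ((ae_restrict_iff' measurableSet_ball).1 hae))
    exact fun z hz heq => (Set.mem_Ioi.1 hz.2).ne (heq hz.1)
  intro z hz
  by_contra hne
  have hmem : z ∈ ball q s ∩ v ⁻¹' Set.Ioi (v q) := ⟨hz, (hmin z hz).lt_of_ne' hne⟩
  rwa [hopen.eq_empty_of_measure_zero hnull] at hmem

end Metric

section Normed

variable {E : Type*} [NormedAddCommGroup E] [NormedSpace ℝ E] [MeasurableSpace E]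
  [OpensMeasurableSpace E] {μ : Measure E} [μ.IsOpenPosMeasure] [IsFiniteMeasureOnCompacts μ]
  {v : E → ℝ≥0∞}

/- Among the minimizers choose one of largest norm. If it were interior, `v` would attain its
minimum on a whole ball around it, which contains points of larger norm. -/
theorem exists_isMinOn_frontier [Nontrivial E] {K : Set E} (hv : SuperMeanValueOn μ v K)
    (hlsc : LowerSemicontinuous v) (hK : IsCompact K) (hne : K.Nonempty) :
    ∃ q ∈ frontier K, IsMinOn v K q := by
  obtain ⟨p, hpK, hp⟩ := (hlsc.lowerSemicontinuousOn K).exists_isMinOn hne hK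
  have hM : IsCompact (K ∩ v ⁻¹' Set.Iic (v p)) := hK.inter_right (hlsc.isClosed_preimage _)
  obtain ⟨q, ⟨hqK, hqp⟩, hq⟩ :=
    hM.exists_isMaxOn ⟨p, hpK, le_refl (v p)⟩ continuous_norm.continuousOn
  have hqmin : IsMinOn v K q := isMinOn_iff.2 fun z hz => le_trans hqp (hp hz)
  refine ⟨q, ⟨subset_closure hqK, fun hqint => ?_⟩, hqmin⟩
  obtain ⟨s, hs, hqs⟩ := nhds_basis_closedBall.mem_iff.1 (mem_interior_iff_mem_nhds.1 hqint)
  have hball : ball q s ⊆ K := ball_subset_closedBall.trans hqs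
  have hfin : μ (ball q s) ≠ ∞ := measure_ne_top_of_subset hball hK.measure_ne_top
  have hconst := hv.eq_of_mem_ball_of_forall_le hlsc hs hqs hfin fun z hz => hqmin (hball hz)
  have hnorm : ball q s ⊆ closedBall 0 ‖q‖ := fun z hz =>
    mem_closedBall_zero_iff.2 (hq ⟨hball hz, (hconst z hz).trans_le hqp⟩)
  have hq_lt : q ∈ ball 0 ‖q‖ := by
    rw [← interior_closedBall' 0 ‖q‖]
    exact interior_maximal hnorm isOpen_ball (mem_ball_self hs)
  exact (mem_ball_zero_iff.1 hq_lt).false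

theorem le_of_norm_le_of_radial [ProperSpace E] {R : ℝ} (hv : SuperMeanValueOn μ v (ball 0 R))
    (hlsc : LowerSemicontinuous v) (hrad : ∀ x y, ‖x‖ = ‖y‖ → v x = v y) {x y : E}
    (hxy : ‖x‖ ≤ ‖y‖) (hy : ‖y‖ < R) : v y ≤ v x := by
  rcases subsingleton_or_nontrivial E with _ | _
  · rw [Subsingleton.elim x y]
  have hx : x ∈ closedBall 0 ‖y‖ := mem_closedBall_zero_iff.2 hxy
  obtain ⟨q, hq, hqmin⟩ := (hv.mono (closedBall_subset_ball hy)).exists_isMinOn_frontier hlsc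
    (isCompact_closedBall 0 ‖y‖) ⟨x, hx⟩
  rw [frontier_closedBall', mem_sphere_zero_iff_norm] at hq
  exact (hrad y q hq.symm).trans_le (hqmin hx)

end Normed

end SuperMeanValueOn

theorem setLIntegral_ball_zero_mul {E : Type*} [NormedAddCommGroup E] [NormedSpace ℝ E]
    [FiniteDimensional ℝ E] [MeasurableSpace E] [BorelSpace E] (μ : Measure E)
    [μ.IsAddHaarMeasure] (f : E → ℝ≥0∞) {c : ℝ} (hc : 0 < c) (r : ℝ) :
    ∫⁻ x in ball 0 (c * r), f x ∂μ =
      ENNReal.ofReal (c ^ Module.finrank ℝ E) * ∫⁻ x in ball 0 r, f (c • x) ∂μ := by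
  have hpre : (c • · : E → E) ⁻¹' ball 0 (c * r) = ball 0 r := by
    ext x
    simp [norm_smul, abs_of_pos hc, hc]
  have hemb : MeasurableEmbedding (c • · : E → E) :=
    (Homeomorph.smulOfNeZero c hc.ne').measurableEmbedding
  have hmap : ∫⁻ x in ball 0 r, f (c • x) ∂μ =
      (ENNReal.ofReal (c ^ Module.finrank ℝ E))⁻¹ * ∫⁻ x in ball 0 (c * r), f x ∂μ := by
    rw [← hpre, ← hemb.lintegral_map, ← hemb.restrict_map, Measure.map_addHaar_smul μ hc.ne',
      Measure.restrict_smul, lintegral_smul_measure, smul_eq_mul, abs_of_pos (by positivity),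
      ENNReal.ofReal_inv_of_pos (by positivity)]
  rw [hmap, ENNReal.mul_inv_cancel_left (by positivity) ENNReal.ofReal_ne_top]

instance {G : Type*} [Group G] [TopologicalSpace G] [IsTopologicalGroup G] [CompactSpace G]
    [MeasurableSpace G] [BorelSpace G] :
    IsProbabilityMeasure (Measure.haarMeasure (⊤ : TopologicalSpace.PositiveCompacts G)) :=
  ⟨Measure.haarMeasure_self⟩

section RotationAverage

variable {E : Type*} [NormedAddCommGroup E] [InnerProductSpace ℝ E] [FiniteDimensional ℝ E]

instance : CompactSpace (unitary (E →L[ℝ] E)) := by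
  have : ProperSpace (E →L[ℝ] E) := FiniteDimensional.proper ℝ _
  refine isCompact_iff_compactSpace.1 (isCompact_of_isClosed_isBounded isClosed_unitary
    (isBounded_iff_forall_norm_le.2 ⟨1, fun g hg => ?_⟩))
  refine g.opNorm_le_bound zero_le_one fun x => ?_
  rw [one_mul, ContinuousLinearMap.norm_map_of_mem_unitary hg]

/-- The average of `v` over the orthogonal group of `E`, with its normalized Haar measure. The
inverse makes invariance under rotations of `x` a matter of left invariance of that measure. -/
def rotationAverage (v : E → ℝ≥0∞) (x : E) : ℝ≥0∞ :=
  ∫⁻ g : unitary (E →L[ℝ] E), v (Unitary.linearIsometryEquiv g⁻¹ x) ∂Measure.haarMeasure ⊤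

variable {v : E → ℝ≥0∞}

theorem continuous_linearIsometryEquiv_inv_apply :
    Continuous fun p : unitary (E →L[ℝ] E) × E => Unitary.linearIsometryEquiv p.1⁻¹ p.2 :=
  (continuous_subtype_val.comp continuous_fst.inv).clm_apply continuous_snd

theorem rotationAverage_eq_of_norm_eq {x y : E} (hxy : ‖x‖ = ‖y‖) :
    rotationAverage v x = rotationAverage v y := by
  let h : unitary (E →L[ℝ] E) := Unitary.linearIsometryEquiv.symm (ℝ ∙ (x - y))ᗮ.reflection
  have hinv (g : unitary (E →L[ℝ] E)) : Unitary.linearIsometryEquiv (h * g)⁻¹ y =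
      Unitary.linearIsometryEquiv g⁻¹ x := by
    rw [← Submodule.reflection_sub hxy]
    simp [h, mul_inv_rev]
  simp_rw [rotationAverage, ← hinv]
  exact lintegral_mul_left_eq_self
    (fun g : unitary (E →L[ℝ] E) => v (Unitary.linearIsometryEquiv g⁻¹ y)) h

variable [MeasurableSpace E] [BorelSpace E]

theorem measurable_uncurry_comp_linearIsometryEquiv_inv (hv : Measurable v) :
    Measurable (Function.uncurry fun (g : unitary (E →L[ℝ] E)) (x : E) =>
      v (Unitary.linearIsometryEquiv g⁻¹ x)) :=
  hv.comp continuous_linearIsometryEquiv_inv_apply.measurable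

theorem lowerSemicontinuous_rotationAverage (hv : LowerSemicontinuous v) :
    LowerSemicontinuous (rotationAverage v) :=
  lowerSemicontinuous_lintegral
    (fun _ => (measurable_uncurry_comp_linearIsometryEquiv_inv hv.measurable).of_uncurry_right)
    fun g => hv.comp (Unitary.linearIsometryEquiv g⁻¹).continuous

theorem SuperMeanValueOn.rotationAverage {R : ℝ} (hv : SuperMeanValueOn volume v (ball 0 R))
    (hmeas : Measurable v) : SuperMeanValueOn volume (rotationAverage v) (ball 0 R) := by
  refine .lintegral (measurable_uncurry_comp_linearIsometryEquiv_inv hmeas) fun g => ?_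
  have hg := hv.comp_isometryEquiv (Unitary.linearIsometryEquiv g⁻¹).toIsometryEquiv
    (Unitary.linearIsometryEquiv g⁻¹).measurePreserving
  simpa [Function.comp_def] using hg

theorem setLIntegral_ball_rotationAverage (hv : Measurable v) (s : ℝ) :
    ∫⁻ x in ball 0 s, rotationAverage v x = ∫⁻ x in ball 0 s, v x :=
  have hrotate (g : unitary (E →L[ℝ] E)) :
      ∫⁻ x in ball 0 s, v (Unitary.linearIsometryEquiv g⁻¹ x) = ∫⁻ x in ball 0 s, v x := by
    have hpre := (Unitary.linearIsometryEquiv g⁻¹).preimage_ball 0 s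
    rw [map_zero] at hpre
    rw [← (Unitary.linearIsometryEquiv g⁻¹).measurePreserving.setLIntegral_comp_preimage_emb
      (Unitary.linearIsometryEquiv g⁻¹).toHomeomorph.measurableEmbedding v, hpre]
  calc ∫⁻ x in ball 0 s, rotationAverage v x
      = ∫⁻ g : unitary (E →L[ℝ] E), (∫⁻ x in ball 0 s,
          v (Unitary.linearIsometryEquiv g⁻¹ x)) ∂Measure.haarMeasure ⊤ :=
        lintegral_lintegral_swap
          ((measurable_uncurry_comp_linearIsometryEquiv_inv hv).comp measurable_swap).aemeasurable
    _ = ∫⁻ x in ball 0 s, v x := by simp_rw [hrotate, lintegral_const, measure_univ, mul_one]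

theorem SuperMeanValueOn.lintegral_ball_zero_mul_le {c r : ℝ}
    (hv : SuperMeanValueOn volume v (ball 0 (c * r)))
    (hlsc : LowerSemicontinuous v) (hc : 1 ≤ c) :
    ∫⁻ x in ball 0 (c * r), v x ≤
      ENNReal.ofReal (c ^ Module.finrank ℝ E) * ∫⁻ x in ball 0 r, v x := by
  have hc₀ : 0 < c := one_pos.trans_le hc
  rw [← setLIntegral_ball_rotationAverage hlsc.measurable,
    ← setLIntegral_ball_rotationAverage hlsc.measurable, setLIntegral_ball_zero_mul volume _ hc₀]
  gcongr 1
  refine setLIntegral_mono' measurableSet_ball fun x hx => ?_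
  have hnorm : ‖c • x‖ = c * ‖x‖ := norm_smul_of_nonneg hc₀.le x
  refine (hv.rotationAverage hlsc.measurable).le_of_norm_le_of_radial
    (lowerSemicontinuous_rotationAverage hlsc) (fun _ _ => rotationAverage_eq_of_norm_eq) ?_ ?_
  · rw [hnorm]
    exact le_mul_of_one_le_left (norm_nonneg x) hc
  · rw [hnorm]
    gcongr
    exact mem_ball_zero_iff.1 hx

theorem SuperMeanValueOn.lintegral_ball_mul_le {a : E} {c r : ℝ}
    (hv : SuperMeanValueOn volume v (ball a (c * r)))
    (hlsc : LowerSemicontinuous v) (hc : 1 ≤ c) :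
    ∫⁻ x in ball a (c * r), v x ≤
      ENNReal.ofReal (c ^ Module.finrank ℝ E) * ∫⁻ x in ball a r, v x := by
  have he := measurePreserving_add_left (volume : Measure E) a
  have hball (s : ℝ) : (IsometryEquiv.addLeft a) ⁻¹' ball a s = ball 0 s := by
    rw [IsometryEquiv.preimage_ball]
    simp
  have htranslate (s : ℝ) : ∫⁻ x in ball 0 s, v (a + x) = ∫⁻ x in ball a s, v x := by
    rw [← hball]
    exact he.setLIntegral_comp_preimage_emb (measurableEmbedding_addLeft a) v (ball a s)
  have hv₀ := hv.comp_isometryEquiv (IsometryEquiv.addLeft a) he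
  rw [hball] at hv₀
  simpa only [Function.comp_apply, IsometryEquiv.addLeft_apply, htranslate] using
    hv₀.lintegral_ball_zero_mul_le (hlsc.comp (IsometryEquiv.addLeft a).continuous) hc

end RotationAverage

theorem stmt_9_general {E : Type*} [NormedAddCommGroup E] [InnerProductSpace ℝ E]
    [FiniteDimensional ℝ E] [MeasurableSpace E] [BorelSpace E] {ψ : E → ℝ} {a : E} {c r : ℝ}
    (hc : 1 ≤ c) (husc : UpperSemicontinuousOn ψ (ball a (c * r)))
    (hmean : ∀ x ∈ ball a (c * r), ∀ s, 0 < s → closedBall x s ⊆ ball a (c * r) →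
      ψ x ≤ ⨍ y in ball x s, ψ y)
    (hnonpos : ∀ x ∈ ball a (c * r), ψ x ≤ 0) (hint : IntegrableOn ψ (ball a (c * r))) :
    ∫ x in ball a (c * r), |ψ x| ≤ c ^ Module.finrank ℝ E * ∫ x in ball a r, |ψ x| := by
  set B := ball a (c * r)
  have hpow : 0 ≤ c ^ Module.finrank ℝ E := pow_nonneg (zero_le_one.trans hc) _
  have hBr : ball a r ⊆ B := fun x hx =>
    ball_subset_ball (le_mul_of_one_le_left (pos_of_mem_ball hx).le hc) hx
  set v : E → ℝ≥0∞ := B.indicator fun x => ENNReal.ofReal (-ψ x)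
  have hlsc : LowerSemicontinuous v :=
    lowerSemicontinuous_indicator_of_isOpen isOpen_ball
      ((ENNReal.continuous_ofReal.comp continuous_neg).comp_upperSemicontinuousOn_antitone husc
        fun _ _ h => ENNReal.ofReal_le_ofReal (neg_le_neg h))
      fun _ _ => zero_le
  have hv : SuperMeanValueOn volume v B := by
    refine SuperMeanValueOn.indicator_ofReal (fun x hx => neg_nonneg.2 (hnonpos x hx)) hint.neg
      fun x hx s hs hxs => ?_
    rw [average_neg]
    exact neg_le_neg (hmean x hx s hs hxs)
  have hofReal {s : ℝ} (hs : ball a s ⊆ B) :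
      ENNReal.ofReal (∫ x in ball a s, |ψ x|) = ∫⁻ x in ball a s, v x := by
    rw [ofReal_integral_eq_lintegral_ofReal (hint.mono_set hs).abs
      (.of_forall fun x => abs_nonneg (ψ x))]
    refine setLIntegral_congr_fun measurableSet_ball fun x hx => ?_
    rw [abs_of_nonpos (hnonpos x (hs hx))]
    exact (Set.indicator_of_mem (hs hx) fun x => ENNReal.ofReal (-ψ x)).symm
  rw [← ENNReal.ofReal_le_ofReal_iff (mul_nonneg hpow (integral_nonneg fun x => abs_nonneg (ψ x))),
    ENNReal.ofReal_mul hpow, hofReal subset_rfl, hofReal hBr]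
  exact hv.lintegral_ball_mul_le hlsc hc

/-- Doubling for negative subharmonic functions:
`∫_{B(a,2r)} |ψ| ≤ 2ⁿ ∫_{B(a,r)} |ψ|`. -/
theorem stmt_9 (n : ℕ) (a : EuclideanSpace ℝ (Fin n)) (r : ℝ) (hr : 0 < r)
    (ψ : EuclideanSpace ℝ (Fin n) → ℝ)
    (hsub : Subh n ψ (ball a (2 * r)))
    (hneg : ∀ x ∈ ball a (2 * r), ψ x < 0)
    (hint : IntegrableOn ψ (ball a (2 * r))) :
    (∫ x in ball a (2 * r), |ψ x|) ≤ 2 ^ n * ∫ x in ball a r, |ψ x| := by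
  simpa only [finrank_euclideanSpace_fin] using
    stmt_9_general one_le_two hsub.1 hsub.2 (fun x hx => (hneg x hx).le) hint
end
end

section
/- Let α > 1 and R > 0. There is a constant C_α > 0 depending only on α such that for every function ψ on the disk B_{2R} ⊆ ℂ that is subharmonic, negative, and integrable on B_{2R}, and every disk B ⊆ B_R, one has ⨍_B |ψ − ψ_B| ≤ C_α ⨍_{B_{3R/2}} (1 + |ψ|)^α. -/
open MeasureTheory Metric
open scoped Real Topology ENNReal

noncomputable section

/-- A function is subharmonic on an open set `U ⊆ ℂ` if it is upper semicontinuous on `U`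
and satisfies the sub-mean value property on disks whose closure lies in `U`. -/
def SubhC (ψ : ℂ → ℝ) (U : Set ℂ) : Prop :=
  UpperSemicontinuousOn ψ U ∧
    ∀ x ∈ U, ∀ s : ℝ, 0 < s → closedBall x s ⊆ U → ψ x ≤ ⨍ y in ball x s, ψ y

/-!
Average `log ‖·‖` over the disk of radius `r` to get the logarithmic potential `E_r` of that disk.
Averaging `E_r` once more over disks of radius `δ` increases it by the average of the nonnegative
kernel `E_δ - log ‖·‖` over the disk of radius `r`, and these kernels are a multiple of an
approximate identity. By Fubini, pairing a function `ψ` with the `δ`-average of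
`h = ∑ i, c i * E_{r i}(· - p i)` minus `h` and letting `δ → 0` therefore evaluates
`∑ i, c i * ⨍ ψ` over the disks `ball (p i) (r i)`. If `h` is nonnegative with compact support and
`ψ` has the sub-mean value property, the pairing is nonnegative, hence so is that sum: a pointwise
inequality between explicit potentials becomes an inequality between disk averages of `ψ`.

A suitable six-term `h` bounds `⨍ ψ` over `ball x s` minus `⨍ ψ` over `ball a s` by averages over
disks of radius comparable to `R`, uniformly in `s`. No scale-by-scale chaining is involved, which
would cost a logarithm of `R / s`. Since `ψ x` is at most its average over `ball x s`, this bounds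
`ψ - ⨍ ψ` from above on `ball a s`, and a one-sided bound controls the mean oscillation.
-/

section

open Filter Set

section BallAverages

variable {E : Type*} [NormedAddCommGroup E] [MeasurableSpace E] {μ : Measure E}

theorem integrableOn_ball_of_locallyIntegrable [ProperSpace E] {f : E → ℝ}
    (hf : LocallyIntegrable f μ) {x : E} {r : ℝ} : IntegrableOn f (ball x r) μ :=
  (hf.integrableOn_isCompact (isCompact_closedBall x r)).mono_set ball_subset_closedBall

variable [BorelSpace E]

theorem setAverage_ball_add_right [μ.IsAddRightInvariant] (f : E → ℝ) (x p : E) (r : ℝ) :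
    ⨍ y in ball (x + p) r, f y ∂μ = ⨍ y in ball x r, f (y + p) ∂μ := by
  have hpre : (· + p) ⁻¹' ball (x + p) r = ball x r := by
    ext y
    simp
  have hmp := measurePreserving_add_right μ p
  rw [setAverage_eq, setAverage_eq, ← hpre,
    hmp.setIntegral_preimage_emb (measurableEmbedding_addRight p), measureReal_def, measureReal_def,
    hmp.measure_preimage measurableSet_ball.nullMeasurableSet]

theorem setAverage_ball_eq_inv_mul_integral_indicator [μ.IsAddHaarMeasure] (f : E → ℝ) (x : E)
    (r : ℝ) :
    ⨍ y in ball x r, f y ∂μ = (μ.real (ball 0 r))⁻¹ * ∫ y, (ball x r).indicator f y ∂μ := by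
  rw [setAverage_eq, measureReal_def, Measure.addHaar_ball_center, ← measureReal_def,
    integral_indicator measurableSet_ball, smul_eq_mul]

variable [NormedSpace ℝ E] [FiniteDimensional ℝ E]

theorem integrable_mul_indicator_ball_sub {f g : E → ℝ} (hf : Integrable f μ)
    (hg : Integrable g μ) (p : E) (r : ℝ) :
    Integrable (Function.uncurry fun x y ↦ f x * (ball (x - p) r).indicator g y) (μ.prod μ) := by
  have hmeas : MeasurableSet {z : E × E | dist z.2 (z.1 - p) < r} :=
    (isOpen_lt (by fun_prop) continuous_const).measurableSet
  refine ((hf.mul_prod hg).indicator hmeas).congr (.of_forall fun z ↦ ?_)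
  simp [indicator, Function.uncurry]

variable [μ.IsAddHaarMeasure]

theorem continuous_setAverage_ball {f : E → ℝ} (hf : LocallyIntegrable f μ) (r : ℝ) :
    Continuous fun x ↦ ⨍ y in ball x r, f y ∂μ := by
  rcases le_or_gt r 0 with hr | hr
  · simpa [ball_eq_empty.2 hr] using continuous_const
  simp_rw [setAverage_ball_eq_inv_mul_integral_indicator]
  refine continuous_const.mul (continuous_iff_continuousAt.2 fun x₀ ↦ ?_)
  have hbound : IntegrableOn f (ball x₀ (r + 1)) μ := integrableOn_ball_of_locallyIntegrable hf
  refine continuousAt_of_dominated (bound := (ball x₀ (r + 1)).indicator fun y ↦ ‖f y‖)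
    (.of_forall fun x ↦ hf.aestronglyMeasurable.indicator measurableSet_ball) ?_
    ((integrable_indicator_iff measurableSet_ball).2 hbound.norm) ?_
  · filter_upwards [ball_mem_nhds x₀ one_pos] with x hx
    refine .of_forall fun y ↦ ?_
    rw [norm_indicator_eq_indicator_norm]
    exact indicator_le_indicator_of_subset
      (ball_subset_ball' (by rw [mem_ball] at hx; linarith)) (fun _ ↦ norm_nonneg _) y
  · have hsphere : ∀ᵐ y ∂μ, y ∉ sphere x₀ r :=
      measure_eq_zero_iff_ae_notMem.1 (Measure.addHaar_sphere_of_ne_zero μ x₀ hr.ne')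
    filter_upwards [hsphere] with y hy
    have hdist : Continuous fun x ↦ dist y x := by fun_prop
    rcases lt_or_gt_of_ne (mt mem_sphere.2 hy) with h | h
    · exact (continuousAt_const (y := f y)).congr
        ((hdist.continuousAt.eventually_lt_const h).mono fun x hx ↦ by simp [hx])
    · exact (continuousAt_const (y := (0 : ℝ))).congr
        ((hdist.continuousAt.eventually_const_lt h).mono fun x hx ↦ by simp [hx.le])

theorem integral_mul_setAverage_ball {f g : E → ℝ} (hf : Integrable f μ) (hg : Integrable g μ)
    (p : E) (r : ℝ) :
    ∫ x, f x * ⨍ y in ball (x - p) r, g y ∂μ ∂μ =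
      ∫ y, (⨍ x in ball (y + p) r, f x ∂μ) * g y ∂μ := by
  have hflip (x y : E) :
      f x * (ball (x - p) r).indicator g y = (ball (y + p) r).indicator f x * g y := by
    have hmem : y ∈ ball (x - p) r ↔ x ∈ ball (y + p) r := by
      rw [mem_ball, mem_ball, dist_comm x, dist_eq_norm, dist_eq_norm, sub_sub_eq_add_sub]
    by_cases hx : x ∈ ball (y + p) r
    · rw [indicator_of_mem hx, indicator_of_mem (hmem.2 hx)]
    · rw [indicator_of_notMem hx, indicator_of_notMem (mt hmem.1 hx), mul_zero, zero_mul]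
  simp_rw [setAverage_ball_eq_inv_mul_integral_indicator, mul_left_comm (f _), mul_assoc,
    integral_const_mul, ← integral_const_mul (f _), ← integral_mul_const]
  rw [integral_integral_swap (integrable_mul_indicator_ball_sub hf hg p r)]
  simp_rw [hflip]

theorem integrable_mul_setAverage_ball {f g : E → ℝ} (hf : Integrable f μ) (hg : Integrable g μ)
    (p : E) (r : ℝ) : Integrable (fun x ↦ f x * ⨍ y in ball (x - p) r, g y ∂μ) μ := by
  refine ((integrable_mul_indicator_ball_sub hf hg p r).integral_prod_left.const_mul
    (μ.real (ball 0 r))⁻¹).congr (.of_forall fun x ↦ ?_)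
  simp only [setAverage_ball_eq_inv_mul_integral_indicator, Function.uncurry_apply_pair,
    integral_const_mul]
  ring

theorem integral_mul_setAverage_ball_sub_nonneg {f h : E → ℝ} (hf : Integrable f μ)
    (hh : Integrable h μ) (hfh : Integrable (fun x ↦ f x * h x) μ) (h_nonneg : 0 ≤ h) {r : ℝ}
    (hsub : ∀ x, h x ≠ 0 → f x ≤ ⨍ y in ball x r, f y ∂μ) :
    0 ≤ ∫ x, f x * ((⨍ y in ball x r, h y ∂μ) - h x) ∂μ := by
  have hint : Integrable (fun x ↦ f x * ⨍ y in ball x r, h y ∂μ) μ := by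
    simpa using integrable_mul_setAverage_ball hf hh 0 r
  have hint' : Integrable (fun x ↦ (⨍ y in ball x r, f y ∂μ) * h x) μ := by
    simpa [mul_comm] using integrable_mul_setAverage_ball hh hf 0 r
  have hflip : ∫ x, f x * ⨍ y in ball x r, h y ∂μ ∂μ = ∫ x, (⨍ y in ball x r, f y ∂μ) * h x ∂μ := by
    simpa using integral_mul_setAverage_ball hf hh 0 r
  simp_rw [mul_sub]
  rw [integral_sub hint hfh, hflip, sub_nonneg]
  refine integral_mono hfh hint' fun x ↦ ?_
  rcases eq_or_ne (h x) 0 with hx | hx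
  · simp [hx]
  · exact mul_le_mul_of_nonneg_right (hsub x hx) (h_nonneg x)

theorem integrable_comp_add_restrict_ball_prod {f : E → ℝ} (hf : LocallyIntegrable f μ)
    (x y : E) (r s : ℝ) :
    Integrable (Function.uncurry fun u v ↦ f (u + v))
      ((μ.restrict (ball x r)).prod (μ.restrict (ball y s))) := by
  have : IsFiniteMeasure (μ.restrict (ball x r)) :=
    isFiniteMeasure_restrict.2 measure_ball_lt_top.ne
  set K := ball (x + y) (r + s)
  have hg : Integrable (K.indicator f) μ :=
    (integrableOn_ball_of_locallyIntegrable hf).integrable_indicator measurableSet_ball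
  have hcomp : Integrable (fun z : E × E ↦ K.indicator f (z.1 + z.2))
      ((μ.restrict (ball x r)).prod μ) :=
    (measurePreserving_prod_add (μ.restrict (ball x r)) μ).integrable_comp_of_integrable
      (hg.comp_snd _)
  refine (hcomp.mono_measure (Measure.prod_mono le_rfl Measure.restrict_le_self)).congr ?_
  rw [Measure.prod_restrict]
  filter_upwards [ae_restrict_mem (measurableSet_ball.prod measurableSet_ball)] with z hz
  refine indicator_of_mem (mem_ball.2 ?_) f
  exact (dist_add_add_le _ _ _ _).trans_lt (add_lt_add hz.1 hz.2)

theorem setAverage_ball_setAverage_ball_comm {f : E → ℝ} (hf : LocallyIntegrable f μ)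
    (x : E) (r s : ℝ) :
    ⨍ y in ball x r, ⨍ z in ball y s, f z ∂μ ∂μ = ⨍ y in ball x s, ⨍ z in ball y r, f z ∂μ ∂μ := by
  have hcenter (g : E → ℝ) (y : E) : ⨍ z in ball y s, g z ∂μ = ⨍ u in ball 0 s, g (u + y) ∂μ := by
    rw [← setAverage_ball_add_right, zero_add]
  calc ⨍ y in ball x r, ⨍ z in ball y s, f z ∂μ ∂μ
      = ⨍ y in ball x r, ⨍ u in ball 0 s, f (y + u) ∂μ ∂μ := by
        simp_rw [hcenter f, add_comm]
    _ = ⨍ u in ball 0 s, ⨍ y in ball x r, f (y + u) ∂μ ∂μ := by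
        simp_rw [setAverage_eq, smul_eq_mul, integral_const_mul]
        rw [integral_integral_swap (integrable_comp_add_restrict_ball_prod hf x 0 r s),
          mul_left_comm]
    _ = ⨍ u in ball 0 s, ⨍ z in ball (u + x) r, f z ∂μ ∂μ := by
        simp_rw [← setAverage_ball_add_right, add_comm x]
    _ = ⨍ y in ball x s, ⨍ z in ball y r, f z ∂μ ∂μ := by
        rw [hcenter fun y ↦ ⨍ z in ball y r, f z ∂μ]

theorem setAverage_ball_abs_le {f : E → ℝ} {c p : E} {r R : ℝ} (hr : 0 < r)
    (hsub : ball p r ⊆ ball c R) (hf : IntegrableOn f (ball c R) μ) :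
    ⨍ x in ball p r, |f x| ∂μ ≤ (R / r) ^ Module.finrank ℝ E * ⨍ x in ball c R, |f x| ∂μ := by
  have hR : 0 < R := pos_of_mem_ball (hsub (mem_ball_self hr))
  have hmono : ∫ x in ball p r, |f x| ∂μ ≤ ∫ x in ball c R, |f x| ∂μ :=
    setIntegral_mono_set hf.abs (.of_forall fun _ ↦ abs_nonneg _) (.of_forall hsub)
  have hvol (q : E) {t : ℝ} (ht : 0 < t) :
      μ.real (ball q t) = t ^ Module.finrank ℝ E * μ.real (ball 0 1) := by
    rw [measureReal_def, Measure.addHaar_ball_of_pos μ q ht, ENNReal.toReal_mul,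
      ENNReal.toReal_ofReal (by positivity), measureReal_def]
  have hunit : 0 < μ.real (ball (0 : E) 1) :=
    ENNReal.toReal_pos (measure_ball_pos μ _ one_pos).ne' measure_ball_lt_top.ne
  rw [setAverage_eq, setAverage_eq, hvol p hr, hvol c hR, smul_eq_mul, smul_eq_mul, div_pow]
  field_simp
  exact hmono

end BallAverages

section MeanOscillation

variable {α : Type*} [MeasurableSpace α] {μ : Measure α} [IsFiniteMeasure μ] {f : α → ℝ}

theorem average_abs_sub_average_le_two_mul_average_abs (hf : Integrable f μ) :
    ⨍ x, |f x - ⨍ y, f y ∂μ| ∂μ ≤ 2 * ⨍ x, |f x| ∂μ := by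
  rcases eq_or_ne μ 0 with rfl | hμ
  · simp
  have : NeZero μ := ⟨hμ⟩
  have hint : Integrable f ((μ Set.univ)⁻¹ • μ) := hf.to_average
  have havg : |⨍ y, f y ∂μ| ≤ ⨍ x, |f x| ∂μ := abs_integral_le_integral_abs
  calc ⨍ x, |f x - ⨍ y, f y ∂μ| ∂μ
      ≤ ⨍ x, (|f x| + |⨍ y, f y ∂μ|) ∂μ :=
        integral_mono (hint.sub (integrable_const _)).abs (hint.abs.add (integrable_const _))
          fun x ↦ abs_sub _ _
    _ = ⨍ x, |f x| ∂μ + |⨍ y, f y ∂μ| := by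
        rw [average, integral_add hint.abs (integrable_const _)]
        simp [average]
    _ ≤ 2 * ⨍ x, |f x| ∂μ := by linarith

theorem average_abs_sub_average_le_two_mul [NeZero μ] {K : ℝ} (hf : Integrable f μ)
    (hK : ∀ᵐ x ∂μ, f x ≤ ⨍ y, f y ∂μ + K) : ⨍ x, |f x - ⨍ y, f y ∂μ| ∂μ ≤ 2 * K := by
  set m := ⨍ y, f y ∂μ with hm
  have hint : Integrable (fun x ↦ f x - m) ((μ Set.univ)⁻¹ • μ) :=
    hf.to_average.sub (integrable_const _)
  have hmean : ⨍ x, (f x - m) ∂μ = 0 := by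
    rw [average, integral_sub hf.to_average (integrable_const _)]
    simp [hm, average]
  have hle : ∀ᵐ x ∂(μ Set.univ)⁻¹ • μ, f x - m ≤ K :=
    Measure.ae_smul_measure (hK.mono fun x hx ↦ sub_le_iff_le_add'.2 hx) _
  have hK0 : 0 ≤ K := by
    simpa [← hmean, average] using integral_mono_ae hint (integrable_const K) hle
  calc ⨍ x, |f x - m| ∂μ
      ≤ ⨍ x, (2 * K - (f x - m)) ∂μ := by
        refine integral_mono_ae hint.abs ((integrable_const _).sub hint) ?_
        filter_upwards [hle] with x hx
        exact abs_le.2 ⟨by linarith, by linarith⟩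
    _ = 2 * K - ⨍ x, (f x - m) ∂μ := by
        rw [average, integral_sub (integrable_const _) hint]
        simp [average]
    _ = 2 * K := by rw [hmean, sub_zero]

end MeanOscillation

section PolarCoordinates

theorem integrableOn_mul_comp_polarCoord_symm {f : ℂ → ℝ} (hf : Integrable f) :
    IntegrableOn (fun p ↦ p.1 * f (Complex.polarCoord.symm p)) polarCoord.target := by
  have hf' : Integrable (f ∘ Complex.measurableEquivRealProd.symm) :=
    (Complex.volume_preserving_equiv_real_prod.symm).integrable_comp_of_integrable hf
  refine ((integrableOn_image_iff_integrableOn_abs_det_fderiv_smul volume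
    polarCoord.open_target.measurableSet
    (fun p _ ↦ (hasFDerivAt_polarCoord_symm p).hasFDerivWithinAt) polarCoord.symm.injOn
    (f ∘ Complex.measurableEquivRealProd.symm)).1 hf'.integrableOn).congr_fun (fun p hp ↦ ?_)
    polarCoord.open_target.measurableSet
  simp only [det_fderivPolarCoordSymm, abs_of_pos (mem_Ioi.1 hp.1), smul_eq_mul,
    Function.comp_apply, Complex.measurableEquivRealProd_symm_polarCoord_symm_apply]

theorem setIntegral_comp_add_polarCoord_symm_eq_circleAverage (f : ℂ → ℝ) (c : ℂ) (r : ℝ) :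
    ∫ θ in Ioo (-π) π, f (c + Complex.polarCoord.symm (r, θ)) =
      2 * π * Real.circleAverage f c r := by
  have hmap (θ : ℝ) : c + Complex.polarCoord.symm (r, θ) = circleMap c r θ := by
    simp [circleMap, Complex.exp_mul_I]
  have hshift := intervalIntegral.integral_comp_add_right (a := 0) (b := 2 * π)
    (fun θ ↦ f (circleMap c r θ)) (-π)
  simp_rw [hmap, Real.circleAverage_eq_integral_add (-π), hshift,
    ← integral_Ioc_eq_integral_Ioo,
    ← intervalIntegral.integral_of_le (neg_le_self Real.pi_pos.le), smul_eq_mul]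
  rw [mul_inv_cancel_left₀ Real.two_pi_pos.ne']
  congr 1 <;> ring

theorem setIntegral_ball_eq_integral_circleAverage {f : ℂ → ℝ} {c : ℂ} {R : ℝ} (hR : 0 ≤ R)
    (hf : IntegrableOn f (ball c R)) :
    ∫ z in ball c R, f z = 2 * π * ∫ r in (0 : ℝ)..R, r * Real.circleAverage f c r := by
  set F : ℂ → ℝ := fun z ↦ (ball c R).indicator f (c + z) with F_def
  have hF : Integrable F :=
    ((integrable_indicator_iff measurableSet_ball).2 hf).comp_add_left c
  have hcircle (r : ℝ) (hr : r ∈ Ioi 0) :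
      ∫ θ in Ioo (-π) π, r * F (Complex.polarCoord.symm (r, θ)) =
        (Iio R).indicator (fun r ↦ 2 * π * (r * Real.circleAverage f c r)) r := by
    have hmem (θ : ℝ) : c + Complex.polarCoord.symm (r, θ) ∈ ball c R ↔ r < R := by
      rw [mem_ball_iff_norm, add_sub_cancel_left, Complex.norm_polarCoord_symm, abs_of_pos hr]
    by_cases hrR : r ∈ Iio R
    · rw [indicator_of_mem hrR, mul_left_comm,
        ← setIntegral_comp_add_polarCoord_symm_eq_circleAverage, ← integral_const_mul]
      simp only [F_def, indicator_of_mem ((hmem _).2 hrR)]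
    · rw [indicator_of_notMem hrR]
      simp only [F_def, indicator_of_notMem (mt (hmem _).1 hrR), mul_zero, integral_zero]
  calc ∫ z in ball c R, f z
      = ∫ z, F z := by
        rw [integral_add_left_eq_self, integral_indicator measurableSet_ball]
    _ = ∫ p in polarCoord.target, p.1 * F (Complex.polarCoord.symm p) :=
        (Complex.integral_comp_polarCoord_symm F).symm
    _ = ∫ r in Ioi 0, ∫ θ in Ioo (-π) π, r * F (Complex.polarCoord.symm (r, θ)) :=
        setIntegral_prod _ (integrableOn_mul_comp_polarCoord_symm hF)
    _ = ∫ r in Ioi 0 ∩ Iio R, 2 * π * (r * Real.circleAverage f c r) := by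
        rw [setIntegral_congr_fun measurableSet_Ioi hcircle,
          setIntegral_indicator measurableSet_Iio]
    _ = 2 * π * ∫ r in (0 : ℝ)..R, r * Real.circleAverage f c r := by
        rw [integral_const_mul, Ioi_inter_Iio, ← integral_Ioc_eq_integral_Ioo,
          intervalIntegral.integral_of_le hR]

theorem setAverage_ball_eq_integral_circleAverage {f : ℂ → ℝ} {c : ℂ} {R : ℝ} (hR : 0 < R)
    (hf : IntegrableOn f (ball c R)) :
    ⨍ z in ball c R, f z = 2 / R ^ 2 * ∫ r in (0 : ℝ)..R, r * Real.circleAverage f c r := by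
  rw [setAverage_eq, setIntegral_ball_eq_integral_circleAverage hR.le hf, measureReal_def,
    Complex.volume_ball, ENNReal.toReal_mul, ENNReal.toReal_pow, ENNReal.toReal_ofReal hR.le,
    ENNReal.coe_toReal, NNReal.coe_real_pi, smul_eq_mul]
  field_simp

end PolarCoordinates

section LogPotential

theorem integral_mul_log {a b : ℝ} (ha : 0 ≤ a) (hab : a ≤ b) :
    ∫ t in a..b, t * Real.log t =
      (b ^ 2 * Real.log b / 2 - b ^ 2 / 4) - (a ^ 2 * Real.log a / 2 - a ^ 2 / 4) := by
  have hcont : Continuous fun t : ℝ ↦ t ^ 2 * Real.log t / 2 - t ^ 2 / 4 := by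
    simp_rw [pow_two, mul_assoc]
    exact ((continuous_id.mul Real.continuous_mul_log).div_const 2).sub (by fun_prop)
  refine intervalIntegral.integral_eq_sub_of_hasDerivAt_of_le hab hcont.continuousOn
    (fun t ht ↦ ?_) (Real.continuous_mul_log.intervalIntegrable a b)
  have ht0 : t ≠ 0 := (ha.trans_lt ht.1).ne'
  refine ((((hasDerivAt_pow 2 t).mul (Real.hasDerivAt_log ht0)).div_const 2).sub
    ((hasDerivAt_pow 2 t).div_const 4)).congr_deriv ?_
  field_simp
  ring

theorem locallyIntegrable_log_norm : LocallyIntegrable fun z : ℂ ↦ Real.log ‖z‖ := by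
  refine locallyIntegrable_iff.2 fun K hK ↦ ?_
  obtain ⟨R, hR⟩ := hK.isBounded.subset_ball 0
  refine IntegrableOn.mono_set ((integrableOn_fun_norm_addHaar volume).2 ?_) hR
  simp_rw [Complex.finrank_real_complex, Nat.add_one_sub_one, pow_one, smul_eq_mul]
  exact (Real.continuous_mul_log.continuousOn.integrableOn_compact isCompact_Icc).mono_set
    Ioo_subset_Icc_self

/-- The average of `log ‖·‖` over the disk of radius `r` about `y`: the logarithmic potential of the
uniform probability measure on the disk of radius `r` about the origin, evaluated at `y`. -/
def diskLogPotential (r : ℝ) (y : ℂ) : ℝ :=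
  ⨍ z in ball y r, Real.log ‖z‖

theorem continuous_diskLogPotential (r : ℝ) : Continuous (diskLogPotential r) :=
  continuous_setAverage_ball locallyIntegrable_log_norm r

theorem circleAverage_log_norm {y : ℂ} {r : ℝ} (hr : 0 < r) :
    Real.circleAverage (fun z ↦ Real.log ‖z‖) y r = Real.log (max r ‖y‖) := by
  have hmax : r * max 1 (r⁻¹ * ‖y‖) = max r ‖y‖ := by
    rw [mul_max_of_nonneg _ _ hr.le, mul_one, mul_inv_cancel_left₀ hr.ne']
  have h := circleAverage_log_norm_sub_const_eq_log_radius_add_posLog (a := 0) (c := y) hr.ne'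
  simp only [sub_zero] at h
  rw [h, Real.posLog_eq_log_max_one (by positivity), ← Real.log_mul hr.ne' (by positivity), hmax]

theorem diskLogPotential_eq_integral {r : ℝ} (hr : 0 < r) (y : ℂ) :
    diskLogPotential r y = 2 / r ^ 2 * ∫ t in (0 : ℝ)..r, t * Real.log (max t ‖y‖) := by
  rw [diskLogPotential, setAverage_ball_eq_integral_circleAverage hr
    (integrableOn_ball_of_locallyIntegrable locallyIntegrable_log_norm)]
  congr 1
  refine intervalIntegral.integral_congr_Ioo_of_le hr.le fun t ht ↦ ?_
  simp only [circleAverage_log_norm ht.1]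

theorem diskLogPotential_of_le_norm {r : ℝ} {y : ℂ} (hr : 0 < r) (hy : r ≤ ‖y‖) :
    diskLogPotential r y = Real.log ‖y‖ := by
  have hcongr : ∫ t in (0 : ℝ)..r, t * Real.log (max t ‖y‖) = ∫ t in (0 : ℝ)..r, t * Real.log ‖y‖ :=
    intervalIntegral.integral_congr_Ioo_of_le hr.le fun t ht ↦ by
      simp only [max_eq_right (ht.2.le.trans hy)]
  rw [diskLogPotential_eq_integral hr, hcongr, intervalIntegral.integral_mul_const, integral_id]
  field_simp
  ring

theorem diskLogPotential_of_norm_le {r : ℝ} {y : ℂ} (hr : 0 < r) (hy : ‖y‖ ≤ r) :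
    diskLogPotential r y = Real.log r + (‖y‖ ^ 2 / r ^ 2 - 1) / 2 := by
  have hinner : EqOn (fun t ↦ t * Real.log (max t ‖y‖)) (fun t ↦ t * Real.log ‖y‖)
      (uIoo 0 ‖y‖) := fun t ht ↦ by
    rw [uIoo_of_le (norm_nonneg y)] at ht
    simp only [max_eq_right ht.2.le]
  have houter : EqOn (fun t ↦ t * Real.log (max t ‖y‖)) (fun t ↦ t * Real.log t) (uIoo ‖y‖ r) :=
    fun t ht ↦ by
      rw [uIoo_of_le hy] at ht
      simp only [max_eq_left ht.1.le]
  have hinner_int := (continuous_mul_const (Real.log ‖y‖)).intervalIntegrable (μ := volume) 0 ‖y‖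
  have houter_int := Real.continuous_mul_log.intervalIntegrable (μ := volume) ‖y‖ r
  rw [diskLogPotential_eq_integral hr, ← intervalIntegral.integral_add_adjacent_intervals
      (hinner_int.congr_uIoo hinner.symm) (houter_int.congr_uIoo houter.symm),
    intervalIntegral.integral_congr_uIoo hinner, intervalIntegral.integral_congr_uIoo houter,
    integral_mul_log (norm_nonneg y) hy, intervalIntegral.integral_mul_const, integral_id]
  field_simp
  ring

/-- The increase of `log ‖·‖` at `y` under averaging over disks of radius `δ`. As `δ → 0` these
kernels, supported in the disk of radius `δ` and nonnegative off the origin (where `log 0 = 0`),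
form a multiple of an approximate identity. -/
def logDefect (δ : ℝ) (y : ℂ) : ℝ :=
  diskLogPotential δ y - Real.log ‖y‖

theorem logDefect_of_le_norm {δ : ℝ} {y : ℂ} (hδ : 0 < δ) (hy : δ ≤ ‖y‖) : logDefect δ y = 0 := by
  rw [logDefect, diskLogPotential_of_le_norm hδ hy, sub_self]

theorem logDefect_pos {δ : ℝ} {y : ℂ} (hy : y ≠ 0) (hδ : ‖y‖ < δ) : 0 < logDefect δ y := by
  have hy0 : 0 < ‖y‖ := norm_pos_iff.2 hy
  have hδ0 : 0 < δ := hy0.trans hδ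
  have hne : ‖y‖ ^ 2 / δ ^ 2 ≠ 1 := (by rw [div_lt_one (by positivity)]; gcongr : _ < _).ne
  have hlog := Real.log_lt_sub_one_of_pos (by positivity : 0 < ‖y‖ ^ 2 / δ ^ 2) hne
  rw [Real.log_div (by positivity) (by positivity), Real.log_pow, Real.log_pow] at hlog
  rw [logDefect, diskLogPotential_of_norm_le hδ0 hδ.le]
  push_cast at hlog
  linarith

theorem support_logDefect_subset {δ : ℝ} (hδ : 0 < δ) :
    Function.support (logDefect δ) ⊆ ball 0 δ := fun y hy ↦ by
  rw [mem_ball_zero_iff]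
  by_contra! hle
  exact hy (logDefect_of_le_norm hδ hle)

theorem integrable_logDefect {δ : ℝ} (hδ : 0 < δ) : Integrable (logDefect δ) := by
  have hloc : LocallyIntegrable (logDefect δ) :=
    (continuous_diskLogPotential δ).locallyIntegrable.sub locallyIntegrable_log_norm
  exact (integrableOn_iff_integrable_of_support_subset (support_logDefect_subset hδ)).1
    (integrableOn_ball_of_locallyIntegrable hloc)

theorem setAverage_ball_diskLogPotential_sub (r δ : ℝ) (x : ℂ) :
    (⨍ y in ball x δ, diskLogPotential r y) - diskLogPotential r x =
      ⨍ y in ball x r, logDefect δ y := by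
  have hsub : ⨍ y in ball x r, logDefect δ y =
      (⨍ y in ball x r, diskLogPotential δ y) - diskLogPotential r x := by
    rw [diskLogPotential, setAverage_eq, setAverage_eq, setAverage_eq, ← smul_sub,
      ← integral_sub
        (integrableOn_ball_of_locallyIntegrable (continuous_diskLogPotential δ).locallyIntegrable)
        (integrableOn_ball_of_locallyIntegrable locallyIntegrable_log_norm)]
    rfl
  rw [hsub]
  simp_rw [diskLogPotential]
  rw [setAverage_ball_setAverage_ball_comm locallyIntegrable_log_norm]

theorem integrable_mul_logDefect {G : ℂ → ℝ} (hG : Continuous G) {δ : ℝ} (hδ : 0 < δ) :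
    Integrable fun z ↦ G z * logDefect δ z := by
  refine (integrableOn_iff_integrable_of_support_subset ?_).1
    ((integrable_logDefect hδ).integrableOn.continuousOn_mul hG.continuousOn
      (isCompact_closedBall 0 δ))
  exact (Function.support_mul_subset_right _ _).trans
    ((support_logDefect_subset hδ).trans ball_subset_closedBall)

theorem nonneg_of_eventually_integral_mul_logDefect_nonneg {G : ℂ → ℝ} (hG : Continuous G)
    (h : ∀ᶠ δ in 𝓝[>] 0, 0 ≤ ∫ z, G z * logDefect δ z) : 0 ≤ G 0 := by
  by_contra! hneg
  obtain ⟨ε, hε, hball⟩ :=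
    Metric.eventually_nhds_iff_ball.1 (hG.continuousAt.eventually_lt_const hneg)
  obtain ⟨δ, hnonneg, hδ, hδε⟩ := (h.and (Ioo_mem_nhdsGT hε)).exists
  have hpos {z : ℂ} (hz0 : z ≠ 0) (hz : ‖z‖ < δ) : 0 < -(G z * logDefect δ z) := by
    have hGz : G z < 0 := hball z (mem_ball_zero_iff.2 (hz.trans hδε))
    exact neg_pos.2 (mul_neg_of_neg_of_pos hGz (logDefect_pos hz0 hz))
  have hint_pos : 0 < ∫ z, -(G z * logDefect δ z) := by
    refine (integral_pos_iff_support_of_nonneg_ae ?_ (integrable_mul_logDefect hG hδ).neg).2 ?_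
    · filter_upwards [Measure.ae_ne volume 0] with z hz0
      rcases lt_or_ge ‖z‖ δ with hz | hz
      · exact (hpos hz0 hz).le
      · simp [logDefect_of_le_norm hδ hz]
    · refine ((isOpen_ball.inter isOpen_compl_singleton).measure_pos volume
        ⟨((δ / 2 : ℝ) : ℂ), ?_, ?_⟩).trans_le (measure_mono fun z hz ↦
          (hpos hz.2 (mem_ball_zero_iff.1 hz.1)).ne')
      · rw [mem_ball_zero_iff, Complex.norm_real, Real.norm_of_nonneg (half_pos hδ).le]
        exact half_lt_self hδ
      · simpa using hδ.ne'
  rw [integral_neg] at hint_pos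
  linarith

end LogPotential

section SubMean

/-- The sub-mean value inequality for `ψ` on closed disks contained in `U`: subharmonicity on `U`
without the upper semicontinuity. -/
def SubMeanOn (ψ : ℂ → ℝ) (U : Set ℂ) : Prop :=
  ∀ x ∈ U, ∀ s > (0 : ℝ), closedBall x s ⊆ U → ψ x ≤ ⨍ y in ball x s, ψ y

theorem SubMeanOn.mono {ψ : ℂ → ℝ} {U V : Set ℂ} (hψ : SubMeanOn ψ V) (hUV : U ⊆ V) :
    SubMeanOn ψ U := fun x hx s hs hsU ↦ hψ x (hUV hx) s hs (hsU.trans hUV)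

variable {ι : Type*} [Fintype ι] {ψ : ℂ → ℝ} {c r : ι → ℝ} {p : ι → ℂ}

theorem continuous_sum_mul_diskLogPotential :
    Continuous fun x ↦ ∑ i, c i * diskLogPotential (r i) (x - p i) :=
  continuous_finsetSum _ fun i _ ↦
    continuous_const.mul ((continuous_diskLogPotential (r i)).comp (continuous_sub_right (p i)))

theorem integral_mul_setAverage_ball_sum_diskLogPotential_sub (hψ : Integrable ψ) {δ : ℝ}
    (hδ : 0 < δ) :
    ∫ x, ψ x * ((⨍ y in ball x δ, ∑ i, c i * diskLogPotential (r i) (y - p i)) -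
        ∑ i, c i * diskLogPotential (r i) (x - p i)) =
      ∫ z, (∑ i, c i * ⨍ y in ball (z + p i) (r i), ψ y) * logDefect δ z := by
  have hshift (x : ℂ) (i : ι) : ⨍ y in ball x δ, diskLogPotential (r i) (y - p i) =
      ⨍ y in ball (x - p i) δ, diskLogPotential (r i) y := by
    simp_rw [sub_eq_add_neg, setAverage_ball_add_right]
  have hkernel (x : ℂ) : (⨍ y in ball x δ, ∑ i, c i * diskLogPotential (r i) (y - p i)) -
      ∑ i, c i * diskLogPotential (r i) (x - p i) =
        ∑ i, c i * ⨍ y in ball (x - p i) (r i), logDefect δ y := by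
    have hint (i : ι) : IntegrableOn (fun y ↦ c i * diskLogPotential (r i) (y - p i)) (ball x δ) :=
      integrableOn_ball_of_locallyIntegrable (continuous_const.mul
        ((continuous_diskLogPotential (r i)).comp (continuous_sub_right (p i)))).locallyIntegrable
    simp_rw [← setAverage_ball_diskLogPotential_sub, mul_sub, Finset.sum_sub_distrib, ← hshift,
      setAverage_eq, integral_finsetSum _ fun i _ ↦ hint i, integral_const_mul, Finset.smul_sum,
      smul_eq_mul, mul_left_comm]
  simp_rw [hkernel, Finset.mul_sum, Finset.sum_mul]
  rw [integral_finsetSum, integral_finsetSum]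
  · refine Finset.sum_congr rfl fun i _ ↦ ?_
    simp_rw [mul_left_comm (ψ _), mul_assoc, integral_const_mul]
    rw [integral_mul_setAverage_ball hψ (integrable_logDefect hδ)]
  · exact fun i _ ↦ integrable_mul_logDefect
      (continuous_const.mul ((continuous_setAverage_ball hψ.locallyIntegrable (r i)).comp
        (continuous_add_const (p i)))) hδ
  · intro i _
    simpa only [mul_left_comm] using
      (integrable_mul_setAverage_ball hψ (integrable_logDefect hδ) (p i) (r i)).const_mul (c i)

theorem sum_mul_setAverage_ball_nonneg (hψ : Integrable ψ)
    (h_nonneg : ∀ x, 0 ≤ ∑ i, c i * diskLogPotential (r i) (x - p i))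
    (h_supp : HasCompactSupport fun x ↦ ∑ i, c i * diskLogPotential (r i) (x - p i))
    (hsub : ∀ᶠ δ in 𝓝[>] 0, ∀ x, ∑ i, c i * diskLogPotential (r i) (x - p i) ≠ 0 →
      ψ x ≤ ⨍ y in ball x δ, ψ y) :
    0 ≤ ∑ i, c i * ⨍ y in ball (p i) (r i), ψ y := by
  have hψh : Integrable fun x ↦ ψ x * ∑ i, c i * diskLogPotential (r i) (x - p i) :=
    hψ.locallyIntegrable.integrable_smul_right_of_hasCompactSupport
      continuous_sum_mul_diskLogPotential h_supp
  have hG : Continuous fun z ↦ ∑ i, c i * ⨍ y in ball (z + p i) (r i), ψ y :=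
    continuous_finsetSum _ fun i _ ↦ continuous_const.mul
      ((continuous_setAverage_ball hψ.locallyIntegrable (r i)).comp (continuous_add_const (p i)))
  simpa using nonneg_of_eventually_integral_mul_logDefect_nonneg hG (by
    filter_upwards [hsub, self_mem_nhdsWithin] with δ hδsub hδ
    rw [← integral_mul_setAverage_ball_sum_diskLogPotential_sub hψ hδ]
    exact integral_mul_setAverage_ball_sub_nonneg hψ
      (continuous_sum_mul_diskLogPotential.integrable_of_hasCompactSupport h_supp)
      hψh h_nonneg hδsub)

theorem SubMeanOn.sum_mul_setAverage_ball_nonneg {U : Set ℂ} (hU : IsOpen U)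
    (hψ : SubMeanOn ψ U) (hint : IntegrableOn ψ U)
    (h_nonneg : ∀ x, 0 ≤ ∑ i, c i * diskLogPotential (r i) (x - p i))
    {K : Set ℂ} (hK : IsCompact K) (hKU : K ⊆ U)
    (h_supp : ∀ x ∉ K, ∑ i, c i * diskLogPotential (r i) (x - p i) = 0)
    (hball : ∀ i, ball (p i) (r i) ⊆ U) :
    0 ≤ ∑ i, c i * ⨍ y in ball (p i) (r i), ψ y := by
  have hext : ∀ {x s}, ball x s ⊆ U → ⨍ y in ball x s, U.indicator ψ y = ⨍ y in ball x s, ψ y :=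
    fun hs ↦ setAverage_congr_fun measurableSet_ball
      (.of_forall fun y hy ↦ indicator_of_mem (hs hy) ψ)
  simp_rw [← fun i ↦ hext (hball i)]
  obtain ⟨ε, hε, hεU⟩ := hK.exists_cthickening_subset_open hU hKU
  refine _root_.sum_mul_setAverage_ball_nonneg ((integrable_indicator_iff hU.measurableSet).2 hint)
    h_nonneg (.intro hK h_supp) ?_
  filter_upwards [Ioc_mem_nhdsGT hε] with δ hδ x hx
  have hxK : x ∈ K := by_contra fun hxK ↦ hx (h_supp x hxK)
  have hδU : closedBall x δ ⊆ U :=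
    ((closedBall_subset_cthickening hxK δ).trans (cthickening_mono hδ.2 K)).trans hεU
  rw [indicator_of_mem (hKU hxK), hext (ball_subset_closedBall.trans hδU)]
  exact hψ x (hKU hxK) δ hδ.1 hδU

end SubMean

section Comparison

theorem diskLogPotential_sub_le_one {r : ℝ} {y z : ℂ} (hr : 0 < r) (hyz : ‖y - z‖ ≤ r) :
    diskLogPotential r y - diskLogPotential r z ≤ 1 := by
  have htri : ‖y‖ ≤ ‖z‖ + r := by linarith [norm_sub_norm_le y z]
  rcases le_total ‖y‖ r with hy | hy <;> rcases le_total ‖z‖ r with hz | hz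
  · have hy1 : ‖y‖ ^ 2 / r ^ 2 ≤ 1 := by rw [div_le_one (by positivity)]; gcongr
    have hz0 : 0 ≤ ‖z‖ ^ 2 / r ^ 2 := by positivity
    rw [diskLogPotential_of_norm_le hr hy, diskLogPotential_of_norm_le hr hz]
    linarith
  · have hy1 : ‖y‖ ^ 2 / r ^ 2 ≤ 1 := by rw [div_le_one (by positivity)]; gcongr
    have hlog : Real.log r ≤ Real.log ‖z‖ := Real.log_le_log hr hz
    rw [diskLogPotential_of_norm_le hr hy, diskLogPotential_of_le_norm hr hz]
    linarith
  · have hlog : Real.log ‖y‖ - Real.log r ≤ ‖z‖ / r := by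
      rw [← Real.log_div (hr.trans_le hy).ne' hr.ne']
      refine (Real.log_le_sub_one_of_pos (div_pos (hr.trans_le hy) hr)).trans ?_
      rw [div_sub_one hr.ne']
      gcongr
      linarith
    rw [diskLogPotential_of_le_norm hr hy, diskLogPotential_of_norm_le hr hz, ← div_pow]
    nlinarith [sq_nonneg (‖z‖ / r - 1)]
  · have hz0 : 0 < ‖z‖ := hr.trans_le hz
    have hratio : ‖y‖ / ‖z‖ ≤ 2 := by rw [div_le_iff₀ hz0]; linarith
    have hlog := Real.log_le_sub_one_of_pos (div_pos (hr.trans_le hy) hz0)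
    rw [Real.log_div (hr.trans_le hy).ne' hz0.ne'] at hlog
    rw [diskLogPotential_of_le_norm hr hy, diskLogPotential_of_le_norm hr hz]
    linarith

theorem quarter_le_diskLogPotential_two_mul_sub {r : ℝ} {z : ℂ} (hr : 0 < r) (hz : ‖z‖ ≤ r) :
    1 / 4 ≤ diskLogPotential (2 * r) z - diskLogPotential r z := by
  have hratio : ‖z‖ ^ 2 / r ^ 2 ≤ 1 := by rw [div_le_one (by positivity)]; gcongr
  have hscale : ‖z‖ ^ 2 / (2 * r) ^ 2 = ‖z‖ ^ 2 / r ^ 2 / 4 := by field_simp; norm_num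
  rw [diskLogPotential_of_norm_le (by positivity) (by linarith), diskLogPotential_of_norm_le hr hz,
    Real.log_mul two_ne_zero hr.ne', hscale]
  linarith [Real.log_two_gt_d9]

theorem diskLogPotential_le_diskLogPotential_two_mul {r : ℝ} (hr : 0 < r) (z : ℂ) :
    diskLogPotential r z ≤ diskLogPotential (2 * r) z := by
  rcases le_total ‖z‖ r with hz | hz
  · linarith [quarter_le_diskLogPotential_two_mul_sub hr hz]
  · rw [diskLogPotential_of_le_norm hr hz, ← sub_nonneg]
    rcases lt_or_ge ‖z‖ (2 * r) with hz' | hz'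
    · exact (logDefect_pos (norm_pos_iff.1 (hr.trans_le hz)) hz').le
    · exact (logDefect_of_le_norm (by positivity) hz').ge

theorem diskLogPotential_eq_of_le_norm {r s : ℝ} {z : ℂ} (hr : 0 < r) (hs : 0 < s) (hrz : r ≤ ‖z‖)
    (hsz : s ≤ ‖z‖) : diskLogPotential r z = diskLogPotential s z := by
  rw [diskLogPotential_of_le_norm hr hrz, diskLogPotential_of_le_norm hs hsz]

/-- The test potential comparing the scales `s` and `ρ`. The difference between the values at `w`
and `z` of `diskLogPotential s - diskLogPotential ρ`, which vanishes outside the disk of radius `ρ`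
when `s ≤ ρ`, is made nonnegative by adding a radial function. The factor `8` absorbs one unit of
oscillation of each of `diskLogPotential s` and `diskLogPotential ρ` into the lower bound `1 / 4` of
`quarter_le_diskLogPotential_two_mul_sub`. -/
def comparisonPotential (s ρ : ℝ) (w z : ℂ) : ℝ :=
  (diskLogPotential s w - diskLogPotential ρ w) - (diskLogPotential s z - diskLogPotential ρ z) +
    8 * (diskLogPotential (2 * (2 * ρ)) w - diskLogPotential (2 * ρ) w)

theorem comparisonPotential_of_two_mul_le_norm {s ρ : ℝ} {w z : ℂ} (hs : 0 < s) (hsρ : s ≤ ρ)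
    (hwz : ‖w - z‖ ≤ s) (hw : 2 * ρ ≤ ‖w‖) :
    comparisonPotential s ρ w z =
      8 * (diskLogPotential (2 * (2 * ρ)) w - diskLogPotential (2 * ρ) w) := by
  have hρ : 0 < ρ := hs.trans_le hsρ
  have hz : ρ ≤ ‖z‖ := by linarith [norm_sub_norm_le w z]
  rw [comparisonPotential, diskLogPotential_eq_of_le_norm hs hρ (by linarith) (by linarith),
    diskLogPotential_eq_of_le_norm hs hρ (hsρ.trans hz) hz]
  ring

theorem comparisonPotential_nonneg {s ρ : ℝ} {w z : ℂ} (hs : 0 < s) (hsρ : s ≤ ρ)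
    (hwz : ‖w - z‖ ≤ s) : 0 ≤ comparisonPotential s ρ w z := by
  have hρ : 0 < ρ := hs.trans_le hsρ
  rcases le_total ‖w‖ (2 * ρ) with hw | hw
  · have hquarter := quarter_le_diskLogPotential_two_mul_sub (by positivity) hw
    have hs_osc := diskLogPotential_sub_le_one hs (norm_sub_rev w z ▸ hwz)
    have hρ_osc := diskLogPotential_sub_le_one hρ (hwz.trans hsρ)
    rw [comparisonPotential]
    linarith
  · have hmono := diskLogPotential_le_diskLogPotential_two_mul (by positivity : 0 < 2 * ρ) w
    rw [comparisonPotential_of_two_mul_le_norm hs hsρ hwz hw]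
    linarith

theorem comparisonPotential_of_le_norm {s ρ : ℝ} {w z : ℂ} (hs : 0 < s) (hsρ : s ≤ ρ)
    (hwz : ‖w - z‖ ≤ s) (hw : 2 * (2 * ρ) ≤ ‖w‖) : comparisonPotential s ρ w z = 0 := by
  have hρ : 0 < ρ := hs.trans_le hsρ
  rw [comparisonPotential_of_two_mul_le_norm hs hsρ hwz (by linarith),
    diskLogPotential_eq_of_le_norm (by positivity) (by positivity : 0 < 2 * ρ) hw (by linarith),
    sub_self, mul_zero]

variable {ψ : ℂ → ℝ}

theorem SubMeanOn.setAverage_ball_sub_le {U : Set ℂ} (hU : IsOpen U) (hψ : SubMeanOn ψ U)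
    (hint : IntegrableOn ψ U) {a x : ℂ} {s ρ : ℝ} (hs : 0 < s) (hsρ : s ≤ ρ) (hx : ‖x - a‖ ≤ s)
    (haU : closedBall a (2 * (2 * ρ)) ⊆ U) :
    (⨍ y in ball x s, ψ y) - ⨍ y in ball a s, ψ y ≤
      (⨍ y in ball x ρ, ψ y) - (⨍ y in ball a ρ, ψ y) +
        8 * ((⨍ y in ball a (2 * (2 * ρ)), ψ y) - ⨍ y in ball a (2 * ρ), ψ y) := by
  have hball {q : ℂ} {t : ℝ} (hqt : t + ‖q - a‖ ≤ 2 * (2 * ρ)) : ball q t ⊆ U :=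
    (ball_subset_ball' (by rwa [dist_eq_norm])).trans (ball_subset_closedBall.trans haU)
  have hdist (y : ℂ) : ‖(y - a) - (y - x)‖ ≤ s := by rwa [sub_sub_sub_cancel_left]
  have hexpand (y : ℂ) : ∑ i, ![1, -1, -1, 1, 8, -8] i *
      diskLogPotential (![s, ρ, s, ρ, 2 * (2 * ρ), 2 * ρ] i) (y - ![a, a, x, x, a, a] i) =
        comparisonPotential s ρ (y - a) (y - x) := by
    simp only [Fin.sum_univ_six, Matrix.cons_val, comparisonPotential]
    ring
  have hsum := hψ.sum_mul_setAverage_ball_nonneg hU hint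
    (fun y ↦ (comparisonPotential_nonneg hs hsρ (hdist y)).trans_eq (hexpand y).symm)
    (isCompact_closedBall a (2 * (2 * ρ))) haU
    (fun y hy ↦ (hexpand y).trans (comparisonPotential_of_le_norm hs hsρ (hdist y) ?_))
    (fun i ↦ hball ?_)
  · simp only [Fin.sum_univ_six, Matrix.cons_val] at hsum
    linarith
  · rw [mem_closedBall_iff_norm, not_le] at hy
    exact hy.le
  · fin_cases i <;> simp <;> linarith

end Comparison

section MainEstimate

variable {ψ : ℂ → ℝ} {c a : ℂ} {R s : ℝ}

theorem SubMeanOn.le_setAverage_ball_add (hψ : SubMeanOn ψ (ball c (3 * R / 2)))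
    (hint : IntegrableOn ψ (ball c (3 * R / 2))) (hs : 0 < s) (hsR : s ≤ R / 8)
    (hball : ball a s ⊆ ball c R) {x : ℂ} (hx : x ∈ ball a s) :
    ψ x ≤ (⨍ y in ball a s, ψ y) + 648 * ⨍ y in ball c (3 * R / 2), |ψ y| := by
  have hclosedBall {q : ℂ} (hq : q ∈ ball c R) {t : ℝ} (ht : t ≤ R / 2) :
      closedBall q t ⊆ ball c (3 * R / 2) :=
    closedBall_subset_ball' (by rw [mem_ball] at hq; linarith)
  have hmean {q : ℂ} (hq : q ∈ ball c R) {t : ℝ} (ht : 0 < t) (htR : t ≤ R / 2) :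
      |⨍ y in ball q t, ψ y| ≤ (3 * R / 2 / t) ^ 2 * ⨍ y in ball c (3 * R / 2), |ψ y| :=
    calc |⨍ y in ball q t, ψ y| ≤ ⨍ y in ball q t, |ψ y| := abs_integral_le_integral_abs
      _ ≤ (3 * R / 2 / t) ^ 2 * ⨍ y in ball c (3 * R / 2), |ψ y| := by
        simpa using setAverage_ball_abs_le ht
          (ball_subset_closedBall.trans (hclosedBall hq htR)) hint
  have hR : 0 < R := by linarith
  have ha : a ∈ ball c R := hball (mem_ball_self hs)
  have hxc : x ∈ ball c R := hball hx
  have hρ : (3 * R / 2 / (R / 8)) ^ 2 = 144 := by field_simp; norm_num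
  have h2ρ : (3 * R / 2 / (2 * (R / 8))) ^ 2 = 36 := by field_simp; norm_num
  have h4ρ : (3 * R / 2 / (2 * (2 * (R / 8)))) ^ 2 = 9 := by field_simp; norm_num
  have hx_le := hψ x (hclosedBall hxc (by linarith) (mem_closedBall_self hs.le)) s hs
    (hclosedBall hxc (by linarith))
  have hcompare := hψ.setAverage_ball_sub_le isOpen_ball hint hs hsR
    (mem_ball_iff_norm.1 hx).le (hclosedBall ha (by linarith))
  have hxρ := le_of_abs_le (hρ ▸ hmean hxc (by positivity) (by linarith))
  have haρ := neg_le_of_abs_le (hρ ▸ hmean ha (by positivity) (by linarith))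
  have ha2ρ := neg_le_of_abs_le (h2ρ ▸ hmean ha (by positivity) (by linarith))
  have ha4ρ := le_of_abs_le (h4ρ ▸ hmean ha (by positivity) (by linarith))
  linarith

theorem SubMeanOn.setAverage_ball_abs_sub_setAverage_le (hψ : SubMeanOn ψ (ball c (3 * R / 2)))
    (hint : IntegrableOn ψ (ball c (3 * R / 2))) (hs : 0 < s) (hball : ball a s ⊆ ball c R) :
    ⨍ z in ball a s, |ψ z - ⨍ w in ball a s, ψ w| ≤
      1296 * ⨍ z in ball c (3 * R / 2), |ψ z| := by
  have hR : 0 < R := pos_of_mem_ball (hball (mem_ball_self hs))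
  have hsub : ball a s ⊆ ball c (3 * R / 2) := hball.trans (ball_subset_ball (by linarith))
  have hint_s : IntegrableOn ψ (ball a s) := hint.mono_set hsub
  have hvol : volume (ball a s) ≠ 0 := (measure_ball_pos volume a hs).ne'
  have : IsFiniteMeasure (volume.restrict (ball a s)) :=
    isFiniteMeasure_restrict.2 measure_ball_lt_top.ne
  have : NeZero (volume.restrict (ball a s)) := ⟨mt Measure.restrict_eq_zero.1 hvol⟩
  rcases le_or_gt s (R / 8) with hsR | hsR
  · have hle : ∀ᵐ x ∂volume.restrict (ball a s), ψ x ≤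
        (⨍ y in ball a s, ψ y) + 648 * ⨍ y in ball c (3 * R / 2), |ψ y| :=
      (ae_restrict_mem measurableSet_ball).mono fun x ↦
        hψ.le_setAverage_ball_add hint hs hsR hball
    exact (average_abs_sub_average_le_two_mul hint_s hle).trans_eq (by ring)
  · have hratio : 3 * R / 2 / s ≤ 12 := by rw [div_le_iff₀ hs]; linarith
    calc ⨍ z in ball a s, |ψ z - ⨍ w in ball a s, ψ w|
        ≤ 2 * ⨍ z in ball a s, |ψ z| := average_abs_sub_average_le_two_mul_average_abs hint_s
      _ ≤ 2 * ((3 * R / 2 / s) ^ 2 * ⨍ z in ball c (3 * R / 2), |ψ z|) := by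
        gcongr
        simpa using setAverage_ball_abs_le hs hsub hint
      _ ≤ 2 * (12 ^ 2 * ⨍ z in ball c (3 * R / 2), |ψ z|) := by
        gcongr
        exact integral_nonneg fun z ↦ abs_nonneg _
      _ ≤ 1296 * ⨍ z in ball c (3 * R / 2), |ψ z| := by
        have : 0 ≤ ⨍ z in ball c (3 * R / 2), |ψ z| := integral_nonneg fun z ↦ abs_nonneg _
        linarith

theorem ofReal_setAverage_abs_le_setLAverage_one_add_rpow {X : Type*} [MeasurableSpace X]
    {μ : Measure X} {f : X → ℝ} {D : Set X} {α : ℝ} (hα : 1 ≤ α) (hf : IntegrableOn f D μ) :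
    ENNReal.ofReal (⨍ x in D, |f x| ∂μ) ≤ ⨍⁻ x in D, ENNReal.ofReal ((1 + |f x|) ^ α) ∂μ := by
  rw [ofReal_setAverage hf.abs (.of_forall fun _ ↦ abs_nonneg _), setLAverage_eq]
  gcongr with x
  calc |f x| ≤ 1 + |f x| := le_add_of_nonneg_left zero_le_one
    _ ≤ (1 + |f x|) ^ α := Real.self_le_rpow_of_one_le (le_add_of_nonneg_right (abs_nonneg _)) hα

theorem stmt_10_general {α : ℝ} (hα : 1 ≤ α) (hψ : SubMeanOn ψ (ball c (3 * R / 2)))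
    (hint : IntegrableOn ψ (ball c (3 * R / 2))) (hs : 0 < s) (hball : ball a s ⊆ ball c R) :
    ENNReal.ofReal (⨍ z in ball a s, |ψ z - ⨍ w in ball a s, ψ w|) ≤
      ENNReal.ofReal 1296 * ⨍⁻ z in ball c (3 * R / 2), ENNReal.ofReal ((1 + |ψ z|) ^ α) ∂volume :=
  calc ENNReal.ofReal (⨍ z in ball a s, |ψ z - ⨍ w in ball a s, ψ w|)
      ≤ ENNReal.ofReal (1296 * ⨍ z in ball c (3 * R / 2), |ψ z|) :=
        ENNReal.ofReal_le_ofReal (hψ.setAverage_ball_abs_sub_setAverage_le hint hs hball)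
    _ = ENNReal.ofReal 1296 * ENNReal.ofReal (⨍ z in ball c (3 * R / 2), |ψ z|) :=
        ENNReal.ofReal_mul (by norm_num)
    _ ≤ _ := by
        gcongr
        exact ofReal_setAverage_abs_le_setLAverage_one_add_rpow hα hint

end MainEstimate

end

/-- There is `C = C_α > 0` such that for every `R > 0`, every negative
subharmonic `ψ` integrable on `B_{2R} ⊆ ℂ`, and every disk `B ⊆ B_R`,
`⨍_B |ψ − ψ_B| ≤ C ⨍_{B_{3R/2}} (1+|ψ|)^α` (the right side taken in `[0,∞]`). -/
theorem stmt_10 (α : ℝ) (hα : 1 < α) :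
    ∃ C > (0 : ℝ), ∀ R > (0 : ℝ), ∀ ψ : ℂ → ℝ,
      SubhC ψ (ball (0 : ℂ) (2 * R)) →
      (∀ z ∈ ball (0 : ℂ) (2 * R), ψ z < 0) →
      IntegrableOn ψ (ball (0 : ℂ) (2 * R)) →
      ∀ (a : ℂ) (s : ℝ), 0 < s → ball a s ⊆ ball (0 : ℂ) R →
        ENNReal.ofReal (⨍ z in ball a s, |ψ z - ⨍ w in ball a s, ψ w|) ≤
          ENNReal.ofReal C * ⨍⁻ z in ball (0 : ℂ) (3 * R / 2), ENNReal.ofReal ((1 + |ψ z|) ^ α) ∂volume := by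
  refine ⟨1296, by norm_num, fun R hR ψ hψ _ hint a s hs hball ↦ ?_⟩
  have hU : ball (0 : ℂ) (3 * R / 2) ⊆ ball 0 (2 * R) := ball_subset_ball (by linarith)
  exact stmt_10_general hα.le (SubMeanOn.mono hψ.2 hU) (hint.mono_set hU) hs hball
end
end
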